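/- Let q be odd, let Ω₀ ⊆ ℝ^{p+1} be a domain, and let f₀ ∈ C^ω(Ω₀, 𝔸) be real analytic. Then the partial even part PE[Δ_x^{(q−1)/2} CK[f₀]] and the partial odd part PO[Δ_x^{(q−1)/2} CK[f₀]] are each harmonic generalized partial-slice functions (elements of Harm(Ω, 𝔸) ∩ GS(Ω, 𝔸)) on a p-symmetric slice domain Ω in M with Ω₀ ⊂ Ω on which CK[f₀] is defined. -/

import Mathlib

open scoped BigOperators
open Filter Topology

namespace GPSM

variable (A : Type*) [NormedAddCommGroup A] [NormedSpace ℝ A] [Mul A] [One A]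

/-- `A` is a real alternative algebra with unit `1`, of finite dimension `d > 1`,
equipped with an anti-involution `conj` (a real-linear map with `(a^c)^c = a`,
`(ab)^c = b^c a^c`, fixing the reals).  The associator is alternating (left/right
alternative laws). -/
structure IsAltStarAlg (conj : A → A) : Prop where
  finDim : FiniteDimensional ℝ A
  one_lt_finrank : 1 < Module.finrank ℝ A
  mul_add' : ∀ a b c : A, a * (b + c) = a * b + a * c
  add_mul' : ∀ a b c : A, (a + b) * c = a * c + b * c
  smul_mul' : ∀ (r : ℝ) (a b : A), (r • a) * b = r • (a * b)
  mul_smul' : ∀ (r : ℝ) (a b : A), a * (r • b) = r • (a * b)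
  one_mul' : ∀ a : A, 1 * a = a
  mul_one' : ∀ a : A, a * 1 = a
  alt_left : ∀ a b : A, a * (a * b) = a * a * b
  alt_right : ∀ a b : A, a * b * b = a * (b * b)
  conj_add : ∀ a b : A, conj (a + b) = conj a + conj b
  conj_smul : ∀ (r : ℝ) (a : A), conj (r • a) = r • conj a
  conj_conj : ∀ a : A, conj (conj a) = a
  conj_mul : ∀ a b : A, conj (a * b) = conj b * conj a
  conj_one : conj 1 = 1

/-- `v 0, v 1, …, v m` is a hypercomplex basis of the hypercomplex subspace
`M = span(v 0, …, v m)` of `A`: `v 0 = 1`, `t(v s) = 0`, `n(v s) = 1`, the `v s`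
anticommute for distinct `s, t ∈ {1,…,m}`, they are linearly independent, and
`M` is contained in the quadratic cone `Q_A`. -/
structure IsHypBasis (conj : A → A) (v : ℕ → A) (m : ℕ) : Prop where
  v_zero : v 0 = 1
  trace_zero : ∀ s, 1 ≤ s → s ≤ m → v s + conj (v s) = 0
  norm_one : ∀ s, 1 ≤ s → s ≤ m → v s * conj (v s) = 1
  anticomm : ∀ s t, 1 ≤ s → s ≤ m → 1 ≤ t → t ≤ m → s ≠ t → v s * v t = -(v t * v s)
  indep : LinearIndependent ℝ (fun i : Fin (m + 1) => v i)
  mem_cone : ∀ x ∈ Submodule.span ℝ (Set.range fun i : Fin (m + 1) => v (i : ℕ)),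
      ∃ tr nr : ℝ, x + conj x = tr • (1 : A) ∧ x * conj x = nr • (1 : A) ∧
        ((∃ r : ℝ, x = r • (1 : A)) ∨ tr ^ 2 < 4 * nr)

variable {A}

/-- Identification of `ℝ^{m+1}` with the hypercomplex subspace `M`:
`(x_0,…,x_m) ↦ Σ x_s • v s`. -/
def emb (v : ℕ → A) (m : ℕ) (x : Fin (m + 1) → ℝ) : A :=
  ∑ s : Fin (m + 1), x s • v (s : ℕ)

/-- First `p+1` coordinates of a point of `M ≅ ℝ^{m+1}`, i.e. the `x_p`-part. -/
def projP (m p : ℕ) (x : Fin (m + 1) → ℝ) : Fin (p + 1) → ℝ := fun s =>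
  if h : (s : ℕ) < m + 1 then x ⟨(s : ℕ), h⟩ else 0

/-- Inclusion `ℝ^{p+1} ⊆ ℝ^{m+1}` (remaining coordinates `0`). -/
def injP (m p : ℕ) (y : Fin (p + 1) → ℝ) : Fin (m + 1) → ℝ := fun s =>
  if h : (s : ℕ) < p + 1 then y ⟨(s : ℕ), h⟩ else 0

/-- The coordinates of `x_q` (last `q = m - p` coordinates of `x`). -/
def xqpart (m p : ℕ) (x : Fin (m + 1) → ℝ) : Fin (m + 1) → ℝ := fun s =>
  if (s : ℕ) ≤ p then 0 else x s

/-- The coordinates of `x_p` inside `ℝ^{m+1}`. -/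
def xppart (m p : ℕ) (x : Fin (m + 1) → ℝ) : Fin (m + 1) → ℝ := fun s =>
  if (s : ℕ) ≤ p then x s else 0

/-- `r = |x_q|`. -/
noncomputable def rad (m p : ℕ) (x : Fin (m + 1) → ℝ) : ℝ :=
  Real.sqrt (∑ s : Fin (m + 1), (xqpart m p x s) ^ 2)

/-- `ω = x_q / |x_q|` (coordinates), `0` when `x_q = 0`. -/
noncomputable def normq (m p : ℕ) (x : Fin (m + 1) → ℝ) : Fin (m + 1) → ℝ :=
  (rad m p x)⁻¹ • xqpart m p x

/-- The reflection `x = x_p + x_q ↦ x_⋄ = x_p - x_q`. -/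
def reflP (m p : ℕ) (x : Fin (m + 1) → ℝ) : Fin (m + 1) → ℝ := fun s =>
  if (s : ℕ) ≤ p then x s else -x s

/-- The sphere `𝕊 = {x_q ∈ span(v_{p+1},…,v_m) : x_q² = -1}`, in coordinates. -/
def Sph (v : ℕ → A) (m p : ℕ) : Set (Fin (m + 1) → ℝ) :=
  {w | (∀ s : Fin (m + 1), (s : ℕ) ≤ p → w s = 0) ∧ emb v m w * emb v m w = -1}

/-- The point `x_p + r ω` of `M ≅ ℝ^{m+1}`. -/
def pt (m p : ℕ) (w : Fin (m + 1) → ℝ) (y : Fin (p + 1) → ℝ) (r : ℝ) :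
    Fin (m + 1) → ℝ :=
  injP m p y + r • w

/-- The slice `Ω_ω ⊆ ℝ^{p+2}` of `Ω` at `ω`. -/
def sliceSet (m p : ℕ) (Ω : Set (Fin (m + 1) → ℝ)) (w : Fin (m + 1) → ℝ) :
    Set ((Fin (p + 1) → ℝ) × ℝ) := {z | pt m p w z.1 z.2 ∈ Ω}

/-- The restriction `f_ω` of `f` to the slice at `ω`, as a function on `ℝ^{p+2}`. -/
def sliceFun (m p : ℕ) (f : (Fin (m + 1) → ℝ) → A) (w : Fin (m + 1) → ℝ) :
    (Fin (p + 1) → ℝ) × ℝ → A := fun z => f (pt m p w z.1 z.2)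

/-- Partial derivative `∂_{x_s}` of a function on `ℝ^{m+1}`. -/
noncomputable def pdF (m : ℕ) (s : Fin (m + 1)) (f : (Fin (m + 1) → ℝ) → A)
    (x : Fin (m + 1) → ℝ) : A := fderiv ℝ f x (Pi.single s 1)

/-- Partial derivative `∂_{x_s}` of a function on `ℝ^{p+1}`. -/
noncomputable def pdP (p : ℕ) (s : Fin (p + 1)) (g : (Fin (p + 1) → ℝ) → A)
    (y : Fin (p + 1) → ℝ) : A := fderiv ℝ g y (Pi.single s 1)

/-- Partial derivative `∂_{x_s}` of a function on `ℝ^{p+2} = ℝ^{p+1} × ℝ`. -/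
noncomputable def pdSx (p : ℕ) (s : Fin (p + 1)) (G : (Fin (p + 1) → ℝ) × ℝ → A)
    (z : (Fin (p + 1) → ℝ) × ℝ) : A := fderiv ℝ G z (Pi.single s 1, 0)

/-- Partial derivative `∂_r` of a function on `ℝ^{p+2} = ℝ^{p+1} × ℝ`. -/
noncomputable def pdSr (p : ℕ) (G : (Fin (p + 1) → ℝ) × ℝ → A)
    (z : (Fin (p + 1) → ℝ) × ℝ) : A := fderiv ℝ G z (0, 1)

/-- Second partial derivative `∂_r²`. -/
noncomputable def pdSr2 (p : ℕ) (G : (Fin (p + 1) → ℝ) × ℝ → A)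
    (z : (Fin (p + 1) → ℝ) × ℝ) : A := pdSr p (pdSr p G) z

/-- The operator `Σ_{lo ≤ s ≤ hi} v_s ∂_{x_s}` on functions on `ℝ^{m+1}`.
`Dop v m 0 p` is `D_{x_p}`, `Dop v m (p+1) m` is `D_{x_q}`, `Dop v m 0 m` is `D_x`. -/
noncomputable def Dop (v : ℕ → A) (m lo hi : ℕ) (f : (Fin (m + 1) → ℝ) → A)
    (x : Fin (m + 1) → ℝ) : A :=
  ∑ s : Fin (m + 1), if lo ≤ (s : ℕ) ∧ (s : ℕ) ≤ hi then v (s : ℕ) * pdF m s f x else 0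

/-- The conjugate operator `∂_{x_0} - Σ_{1 ≤ s ≤ hi} v_s ∂_{x_s}` on functions on
`ℝ^{m+1}`; `Dbarop v m p` is `D̄_{x_p}`, `Dbarop v m m` is `D̄_x`. -/
noncomputable def Dbarop (v : ℕ → A) (m hi : ℕ) (f : (Fin (m + 1) → ℝ) → A)
    (x : Fin (m + 1) → ℝ) : A :=
  pdF m 0 f x -
    ∑ s : Fin (m + 1), if 1 ≤ (s : ℕ) ∧ (s : ℕ) ≤ hi then v (s : ℕ) * pdF m s f x else 0

/-- The operator `D_{x_p} = Σ_{s=0}^p v_s ∂_{x_s}` on functions on `ℝ^{p+1}`. -/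
noncomputable def DopP (v : ℕ → A) (p : ℕ) (g : (Fin (p + 1) → ℝ) → A)
    (y : Fin (p + 1) → ℝ) : A :=
  ∑ s : Fin (p + 1), v (s : ℕ) * pdP p s g y

/-- The operator `D̄_{x_p} = ∂_{x_0} - Σ_{s=1}^p v_s ∂_{x_s}` on functions on `ℝ^{p+1}`. -/
noncomputable def DbaropP (v : ℕ → A) (p : ℕ) (g : (Fin (p + 1) → ℝ) → A)
    (y : Fin (p + 1) → ℝ) : A :=
  pdP p 0 g y - ∑ s : Fin (p + 1), if 1 ≤ (s : ℕ) then v (s : ℕ) * pdP p s g y else 0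

/-- The operator `D_{x_p}` on functions on `ℝ^{p+2} = ℝ^{p+1} × ℝ`. -/
noncomputable def DopSx (v : ℕ → A) (p : ℕ) (G : (Fin (p + 1) → ℝ) × ℝ → A)
    (z : (Fin (p + 1) → ℝ) × ℝ) : A :=
  ∑ s : Fin (p + 1), v (s : ℕ) * pdSx p s G z

/-- The operator `D̄_{x_p}` on functions on `ℝ^{p+2} = ℝ^{p+1} × ℝ`. -/
noncomputable def DbaropSx (v : ℕ → A) (p : ℕ) (G : (Fin (p + 1) → ℝ) × ℝ → A)
    (z : (Fin (p + 1) → ℝ) × ℝ) : A :=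
  pdSx p 0 G z - ∑ s : Fin (p + 1), if 1 ≤ (s : ℕ) then v (s : ℕ) * pdSx p s G z else 0

/-- The Laplacian `Δ_x` on functions on `ℝ^{m+1}`. -/
noncomputable def lapF (m : ℕ) (f : (Fin (m + 1) → ℝ) → A)
    (x : Fin (m + 1) → ℝ) : A :=
  ∑ s : Fin (m + 1), pdF m s (pdF m s f) x

/-- The Laplacian `Δ_{x_p}` on functions on `ℝ^{p+1}`. -/
noncomputable def lapP (p : ℕ) (g : (Fin (p + 1) → ℝ) → A)
    (y : Fin (p + 1) → ℝ) : A :=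
  ∑ s : Fin (p + 1), pdP p s (pdP p s g) y

/-- Iterated Laplacian `Δ_x^k`. -/
noncomputable def lapIterF (m k : ℕ) (f : (Fin (m + 1) → ℝ) → A) :
    (Fin (m + 1) → ℝ) → A :=
  (fun g => lapF m g)^[k] f

/-- Iterated Laplacian `Δ_{x_p}^k`. -/
noncomputable def lapIterP (p k : ℕ) (g : (Fin (p + 1) → ℝ) → A) :
    (Fin (p + 1) → ℝ) → A :=
  (fun h => lapP p h)^[k] g

/-- The Laplacian `Δ_{x'} = Δ_{x_p} + ∂_r²` on functions on `ℝ^{p+2}`. -/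
noncomputable def lapSx (p : ℕ) (G : (Fin (p + 1) → ℝ) × ℝ → A)
    (z : (Fin (p + 1) → ℝ) × ℝ) : A :=
  (∑ s : Fin (p + 1), pdSx p s (pdSx p s G) z) + pdSr2 p G z

/-- The slice Cauchy-Riemann operator `D_ω = D_{x_p} + ω ∂_r` applied to a function
on `ℝ^{p+2}`, where `ω` is given in coordinates by `w`. -/
noncomputable def DomCR (v : ℕ → A) (m p : ℕ) (w : Fin (m + 1) → ℝ)
    (G : (Fin (p + 1) → ℝ) × ℝ → A) (z : (Fin (p + 1) → ℝ) × ℝ) : A :=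
  DopSx v p G z + emb v m w * pdSr p G z

/-- `f` is left generalized partial-slice monogenic (of type `(p, m-p)`) on `Ω`. -/
def GSM (v : ℕ → A) (m p : ℕ) (f : (Fin (m + 1) → ℝ) → A)
    (Ω : Set (Fin (m + 1) → ℝ)) : Prop :=
  ∀ w ∈ Sph v m p, ContDiffOn ℝ 1 (sliceFun m p f w) (sliceSet m p Ω w) ∧
    ∀ z ∈ sliceSet m p Ω w, DomCR v m p w (sliceFun m p f w) z = 0

/-- `Ω` is partially symmetric with respect to `ℝ^{p+1}`. -/
def PSym (v : ℕ → A) (m p : ℕ) (Ω : Set (Fin (m + 1) → ℝ)) : Prop :=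
  ∀ x ∈ Ω, ∀ w ∈ Sph v m p, xppart m p x + rad m p x • w ∈ Ω

/-- `Ω` is a slice domain: a domain meeting `ℝ^{p+1}` all of whose slices are
domains in `ℝ^{p+2}`. -/
def SliceDomain (v : ℕ → A) (m p : ℕ) (Ω : Set (Fin (m + 1) → ℝ)) : Prop :=
  IsOpen Ω ∧ IsConnected Ω ∧ (∃ x ∈ Ω, xqpart m p x = 0) ∧
    ∀ w ∈ Sph v m p, IsConnected (sliceSet m p Ω w)

/-- The reflection `(x_p, r) ↦ (x_p, -r)` of `ℝ^{p+2}`. -/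
def reflD (p : ℕ) (z : (Fin (p + 1) → ℝ) × ℝ) : (Fin (p + 1) → ℝ) × ℝ := (z.1, -z.2)

/-- The p-symmetric completion `Ω_D ⊆ M` of `D ⊆ ℝ^{p+2}`. -/
def OmegaD (v : ℕ → A) (m p : ℕ) (D : Set ((Fin (p + 1) → ℝ) × ℝ)) :
    Set (Fin (m + 1) → ℝ) :=
  {x | ∃ w ∈ Sph v m p, ∃ z ∈ D, x = pt m p w z.1 z.2}

/-- `(F₁, F₂)` satisfies the even-odd (stem function) conditions on `D`. -/
def IsStem (p : ℕ) (D : Set ((Fin (p + 1) → ℝ) × ℝ))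
    (F₁ F₂ : (Fin (p + 1) → ℝ) × ℝ → A) : Prop :=
  ∀ z ∈ D, F₁ (reflD p z) = F₁ z ∧ F₂ (reflD p z) = -F₂ z

/-- `f` is the generalized partial-slice function induced by the stem `(F₁, F₂)`:
`f(x_p + rω) = F₁(x_p, r) + ω F₂(x_p, r)`. -/
def Induced (v : ℕ → A) (m p : ℕ) (D : Set ((Fin (p + 1) → ℝ) × ℝ))
    (F₁ F₂ : (Fin (p + 1) → ℝ) × ℝ → A) (f : (Fin (m + 1) → ℝ) → A) : Prop :=
  ∀ w ∈ Sph v m p, ∀ z ∈ D, f (pt m p w z.1 z.2) = F₁ z + emb v m w * F₂ z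

/-- The generalized Cauchy-Riemann system for the stem `(F₁, F₂)` on `D`. -/
def StemCR (v : ℕ → A) (p : ℕ) (D : Set ((Fin (p + 1) → ℝ) × ℝ))
    (F₁ F₂ : (Fin (p + 1) → ℝ) × ℝ → A) : Prop :=
  ∀ z ∈ D, DopSx v p F₁ z - pdSr p F₂ z = 0 ∧ DbaropSx v p F₂ z + pdSr p F₁ z = 0

/-- `f` is generalized partial-slice regular on `Ω_D`. -/
def MemGSR (v : ℕ → A) (m p : ℕ) (D : Set ((Fin (p + 1) → ℝ) × ℝ))
    (f : (Fin (m + 1) → ℝ) → A) : Prop :=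
  ∃ F₁ F₂ : (Fin (p + 1) → ℝ) × ℝ → A, IsStem p D F₁ F₂ ∧
    ContDiffOn ℝ 1 F₁ D ∧ ContDiffOn ℝ 1 F₂ D ∧
    Induced v m p D F₁ F₂ f ∧ StemCR v p D F₁ F₂

/-- `f` is a generalized partial-slice function on `Ω`. -/
def MemGS (v : ℕ → A) (m p : ℕ) (Ω : Set (Fin (m + 1) → ℝ))
    (f : (Fin (m + 1) → ℝ) → A) : Prop :=
  ∃ F₁ F₂ : (Fin (p + 1) → ℝ) × ℝ → A,
    (∀ z : (Fin (p + 1) → ℝ) × ℝ, F₁ (reflD p z) = F₁ z ∧ F₂ (reflD p z) = -F₂ z) ∧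
    ∀ x ∈ Ω, f x = F₁ (projP m p x, rad m p x) +
      emb v m (normq m p x) * F₂ (projP m p x, rad m p x)

/-- Non-associative power: `a^n` with products taken from the right. -/
def apow (a : A) (n : ℕ) : A := (fun b => a * b)^[n] 1

/-- Partial even part `PE[f](x) = (f(x) + f(x_⋄))/2`. -/
noncomputable def PE (m p : ℕ) (f : (Fin (m + 1) → ℝ) → A)
    (x : Fin (m + 1) → ℝ) : A := (2 : ℝ)⁻¹ • (f x + f (reflP m p x))

/-- Partial odd part `PO[f](x) = (f(x) - f(x_⋄))/2`. -/
noncomputable def PO (m p : ℕ) (f : (Fin (m + 1) → ℝ) → A)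
    (x : Fin (m + 1) → ℝ) : A := (2 : ℝ)⁻¹ • (f x - f (reflP m p x))

/-- `Ω₀* = {x_p + x_q : x_p ∈ Ω₀, x_q ∈ ℝ^q}`. -/
def Omega0star (m p : ℕ) (Ω₀ : Set (Fin (p + 1) → ℝ)) : Set (Fin (m + 1) → ℝ) :=
  {x | projP m p x ∈ Ω₀}

/-- The spherical derivative `f'_s(x) = (1/2) x_q⁻¹ (f(x) - f(x_⋄))`
(using `x_q⁻¹ = -x_q/|x_q|²`). -/
noncomputable def sder (v : ℕ → A) (m p : ℕ) (f : (Fin (m + 1) → ℝ) → A)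
    (x : Fin (m + 1) → ℝ) : A :=
  -(((2 : ℝ) * rad m p x ^ 2)⁻¹) • (emb v m (xqpart m p x) * (f x - f (reflP m p x)))

/-- The spherical Dirac operator
`Γ f = -(1/2) Σ_{p+1 ≤ i,j ≤ m} v_i (v_j (L_{ij} f))`. -/
noncomputable def sphericalGamma (v : ℕ → A) (m p : ℕ) (f : (Fin (m + 1) → ℝ) → A)
    (x : Fin (m + 1) → ℝ) : A :=
  -((2 : ℝ)⁻¹) • ∑ i : Fin (m + 1), ∑ j : Fin (m + 1),
    if p < (i : ℕ) ∧ p < (j : ℕ) then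
      v (i : ℕ) * (v (j : ℕ) * (x i • pdF m j f x - x j • pdF m i f x)) else 0

/-- The slice Cauchy-Riemann operator `D_ω` applied to (the slice restriction of) a
function `f` on `M`, at the point `x` (with `ω = x_q/|x_q|`). -/
noncomputable def DomCRat (v : ℕ → A) (m p : ℕ) (f : (Fin (m + 1) → ℝ) → A)
    (x : Fin (m + 1) → ℝ) : A :=
  DomCR v m p (normq m p x) (sliceFun m p f (normq m p x)) (projP m p x, rad m p x)

/-- `f` is left monogenic on `Ω`: `f ∈ C¹` and `D_x f = 0`. -/
def Monogenic (v : ℕ → A) (m : ℕ) (f : (Fin (m + 1) → ℝ) → A)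
    (Ω : Set (Fin (m + 1) → ℝ)) : Prop :=
  ContDiffOn ℝ 1 f Ω ∧ ∀ x ∈ Ω, Dop v m 0 m f x = 0

/-- `f` is harmonic on `Ω`: `f ∈ C²` and `Δ_x f = 0`. -/
def Harmonic (m : ℕ) (f : (Fin (m + 1) → ℝ) → A)
    (Ω : Set (Fin (m + 1) → ℝ)) : Prop :=
  ContDiffOn ℝ 2 f Ω ∧ ∀ x ∈ Ω, lapF m f x = 0

/-- A family of functions converges normally (locally a summable uniform bound). -/
def NormallyConvOn {E F : Type*} [TopologicalSpace E] [NormedAddCommGroup F]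
    (u : ℕ → E → F) (s : Set E) : Prop :=
  ∀ x ∈ s, ∃ U ∈ nhds x, ∃ c : ℕ → ℝ, Summable c ∧ ∀ k : ℕ, ∀ y ∈ U, ‖u k y‖ ≤ c k

/-- The generalized partial-slice CK-extension
`CK[f₀](x) = Σ_k (r^{2k}/(2k)!)(-Δ_{x_p})^k f₀(x_p)
  + ω Σ_k (r^{2k+1}/(2k+1)!)(-Δ_{x_p})^k (D_{x_p} f₀)(x_p)`. -/
noncomputable def CKe (v : ℕ → A) (m p : ℕ) (f₀ : (Fin (p + 1) → ℝ) → A)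
    (x : Fin (m + 1) → ℝ) : A :=
  (∑' k : ℕ, (((-1 : ℝ) ^ k * rad m p x ^ (2 * k)) / (2 * k).factorial) •
      lapIterP p k f₀ (projP m p x)) +
  emb v m (normq m p x) *
    ∑' k : ℕ, (((-1 : ℝ) ^ k * rad m p x ^ (2 * k + 1)) / (2 * k + 1).factorial) •
      lapIterP p k (DopP v p f₀) (projP m p x)

/-- The coefficient `Γ(q/2)(-1)^k r^{2k} / (2^{2k} k! Γ(k + q/2))`. -/
noncomputable def hgckC (q k : ℕ) (r : ℝ) : ℝ :=
  (Real.Gamma ((q : ℝ) / 2) * (-1) ^ k * r ^ (2 * k)) /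
    (2 ^ (2 * k) * (k.factorial : ℝ) * Real.Gamma ((k : ℝ) + (q : ℝ) / 2))

/-- The coefficient `Γ(q/2)(-1)^k r^{2k} / (2^{2k+1} k! Γ(k + q/2 + 1))`. -/
noncomputable def gckC' (q k : ℕ) (r : ℝ) : ℝ :=
  (Real.Gamma ((q : ℝ) / 2) * (-1) ^ k * r ^ (2 * k)) /
    (2 ^ (2 * k + 1) * (k.factorial : ℝ) * Real.Gamma ((k : ℝ) + (q : ℝ) / 2 + 1))

/-- The coefficient `Γ(q/2 + 1)(-1)^k r^{2k} / (2^{2k} k! Γ(k + q/2 + 1))`. -/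
noncomputable def hgckC' (q k : ℕ) (r : ℝ) : ℝ :=
  (Real.Gamma ((q : ℝ) / 2 + 1) * (-1) ^ k * r ^ (2 * k)) /
    (2 ^ (2 * k) * (k.factorial : ℝ) * Real.Gamma ((k : ℝ) + (q : ℝ) / 2 + 1))

/-- The monogenic generalized CK-extension `GCK[A₀]`. -/
noncomputable def GCKe (v : ℕ → A) (m p : ℕ) (A₀ : (Fin (p + 1) → ℝ) → A)
    (x : Fin (m + 1) → ℝ) : A :=
  (∑' k : ℕ, hgckC (m - p) k (rad m p x) • lapIterP p k A₀ (projP m p x)) +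
  emb v m (xqpart m p x) *
    ∑' k : ℕ, gckC' (m - p) k (rad m p x) • lapIterP p k (DopP v p A₀) (projP m p x)

/-- The harmonic generalized CK-extension `HGCK[A₀, A₁]`. -/
noncomputable def HGCKe (v : ℕ → A) (m p : ℕ) (A₀ A₁ : (Fin (p + 1) → ℝ) → A)
    (x : Fin (m + 1) → ℝ) : A :=
  (∑' k : ℕ, hgckC (m - p) k (rad m p x) • lapIterP p k A₀ (projP m p x)) +
  emb v m (xqpart m p x) *
    ∑' k : ℕ, hgckC' (m - p) k (rad m p x) • lapIterP p k A₁ (projP m p x)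

/-- The operator `(1/r)∂_r`, extended to `r = 0` by its limit `∂_r²` (on even
functions). -/
noncomputable def T1 (p : ℕ) (G : (Fin (p + 1) → ℝ) × ℝ → A) :
    (Fin (p + 1) → ℝ) × ℝ → A := fun z =>
  if z.2 = 0 then pdSr2 p G z else (z.2)⁻¹ • pdSr p G z

/-- The operator `∂_r ∘ (1/r)`, extended to `r = 0` by its limit `(1/2)∂_r²` (on odd
functions). -/
noncomputable def T2 (p : ℕ) (G : (Fin (p + 1) → ℝ) × ℝ → A) :
    (Fin (p + 1) → ℝ) × ℝ → A := fun z =>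
  if z.2 = 0 then (2 : ℝ)⁻¹ • pdSr2 p G z
  else fderiv ℝ (fun t : ℝ => t⁻¹ • G (z.1, t)) z.2 1

/-- `C_q(k) = (q-1)(q-3)⋯(q-2k+1)`, `C_q(0) = 1`. -/
noncomputable def cq (q k : ℕ) : ℝ :=
  ∏ i ∈ Finset.range k, ((q : ℝ) - (2 * (i : ℝ) + 1))

/-- Double factorial. -/
def dfac : ℕ → ℕ
  | 0 => 1
  | 1 => 1
  | n + 2 => (n + 2) * dfac n

/-- The Fueter-Sce constant `γ_q = (-1)^{(q-1)/2} (q-1)!!/(q-2)!!`. -/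
noncomputable def gammaQ (q : ℕ) : ℝ :=
  (-1 : ℝ) ^ ((q - 1) / 2) * (dfac (q - 1) : ℝ) / (dfac (q - 2) : ℝ)


section Analysis
open scoped ContDiff NNReal ENNReal

variable {E F : Type*} [NormedAddCommGroup E] [NormedSpace ℝ E]
  [NormedAddCommGroup F] [NormedSpace ℝ F]

/-- Cauchy estimates for a real analytic function. -/
theorem analytic_bound [CompleteSpace F] {f : E → F} {x : E} (hf : AnalyticAt ℝ f x) :
    ∃ ε > 0, ∃ C R : ℝ, 0 ≤ C ∧ 0 < R ∧ ∀ y ∈ Metric.ball x ε, ∀ n : ℕ,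
      ‖iteratedFDeriv ℝ n f y‖ ≤ C * R ^ n * n.factorial := by
  obtain ⟨p, r, hp⟩ := hf
  obtain ⟨a, ha0, ha⟩ := ENNReal.lt_iff_exists_nnreal_btwn.1 hp.r_pos
  have ha0' : 0 < a := by exact_mod_cast ha0
  have hrad : ((a / 2 : ℝ≥0) : ℝ≥0∞) + ((a / 2 : ℝ≥0) : ℝ≥0∞) < p.radius := by
    rw [← ENNReal.coe_add, add_halves]
    exact lt_of_lt_of_le ha hp.r_le
  have hS := p.changeOriginSeries_summable_aux₁ hrad
  have hS1 := (NNReal.summable_sigma.1 hS).1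
  have hS2 := (NNReal.summable_sigma.1 hS).2
  set b : ℝ≥0 := a / 2 with hb
  have hb0 : 0 < b := by positivity
  set S : ℝ≥0 := ∑' k : ℕ, ∑' s : Σ l : ℕ, { s : Finset (Fin (k + l)) // s.card = l },
    ‖p (k + s.1)‖₊ * b ^ s.1 * b ^ k with hSdef
  refine ⟨b, by exact_mod_cast hb0, S, (b : ℝ)⁻¹, S.2, by positivity, ?_⟩
  intro y hy n
  have hyb : ‖y - x‖₊ ≤ b := by
    rw [Metric.mem_ball, dist_eq_norm] at hy
    exact_mod_cast hy.le
  have hlt : ((‖y - x‖₊ : ℝ≥0) : ℝ≥0∞) < r := by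
    refine lt_of_le_of_lt ?_ ha
    have : b ≤ a := by rw [hb]; exact half_le_self (zero_le)
    exact_mod_cast hyb.trans this
  have hco := hp.changeOrigin hlt
  have hn : ‖p.changeOrigin (y - x) n‖₊ ≤ S * (b⁻¹) ^ n := by
    have h1 := p.nnnorm_changeOrigin_le n (hlt.trans_le hp.r_le)
    have hsum2 : Summable fun s : Σ l : ℕ, { s : Finset (Fin (n + l)) // s.card = l } =>
        ‖p (n + s.1)‖₊ * b ^ s.1 := by
      refine p.changeOriginSeries_summable_aux₂ (lt_of_le_of_lt ?_ hrad) n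
      exact le_add_of_nonneg_left zero_le
    have h2 : (∑' s : Σ l : ℕ, { s : Finset (Fin (n + l)) // s.card = l },
        ‖p (n + s.1)‖₊ * ‖y - x‖₊ ^ s.1) ≤
        ∑' s : Σ l : ℕ, { s : Finset (Fin (n + l)) // s.card = l }, ‖p (n + s.1)‖₊ * b ^ s.1 := by
      refine Summable.tsum_le_tsum (fun s => by gcongr) ?_ hsum2
      exact NNReal.summable_of_le (fun s => by gcongr) hsum2
    have h3 : (∑' s : Σ l : ℕ, { s : Finset (Fin (n + l)) // s.card = l },
        ‖p (n + s.1)‖₊ * b ^ s.1) * b ^ n ≤ S := by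
      rw [← NNReal.tsum_mul_right]
      exact hS2.le_tsum n (fun _ _ => zero_le)
    have h4 := h1.trans h2
    calc _ ≤ _ := h4
      _ = (∑' s : Σ l : ℕ, { s : Finset (Fin (n + l)) // s.card = l },
        ‖p (n + s.1)‖₊ * b ^ s.1) * b ^ n * (b⁻¹) ^ n := by
          rw [mul_assoc, ← mul_pow, mul_inv_cancel₀ hb0.ne', one_pow, mul_one]
      _ ≤ _ := by gcongr
  have hn' : ‖p.changeOrigin (y - x) n‖ ≤ S * ((b : ℝ)⁻¹) ^ n := by exact_mod_cast hn
  refine ContinuousMultilinearMap.opNorm_le_bound (by positivity) ?_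
  intro w
  have hxy : x + (y - x) = y := by abel
  rw [hxy] at hco
  rw [hco.iteratedFDeriv_eq_sum_of_completeSpace]
  refine (norm_sum_le _ _).trans ?_
  have : ∀ σ ∈ (Finset.univ : Finset (Equiv.Perm (Fin n))),
      ‖p.changeOrigin (y - x) n (fun i => w (σ i))‖ ≤ S * ((b : ℝ)⁻¹) ^ n * ∏ i, ‖w i‖ := by
    intro σ _
    refine (ContinuousMultilinearMap.le_opNorm _ _).trans ?_
    rw [Equiv.prod_comp σ (fun i => ‖w i‖)]
    gcongr
  refine (Finset.sum_le_sum this).trans ?_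
  simp only [Finset.sum_const, Finset.card_univ, Fintype.card_perm, Fintype.card_fin, nsmul_eq_mul]
  apply le_of_eq
  ring

/-- Directional derivative. -/
noncomputable def dd (e : E) (f : E → F) (x : E) : F := fderiv ℝ f x e

theorem dd_congr {V : Set E} (hV : IsOpen V) {f g : E → F} (h : Set.EqOn f g V) (e : E) :
    Set.EqOn (dd e f) (dd e g) V := by
  intro x hx
  have : f =ᶠ[𝓝 x] g := h.eventuallyEq_of_mem (hV.mem_nhds hx)
  simp only [dd, this.fderiv_eq]

theorem dd_contDiffOn {V : Set E} (hV : IsOpen V) {f : E → F} (h : ContDiffOn ℝ ∞ f V) (e : E) :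
    ContDiffOn ℝ ∞ (dd e f) V := by
  have := (contDiffOn_infty_iff_fderiv_of_isOpen hV).1 h
  exact this.2.clm_apply contDiffOn_const

theorem norm_iter_dd_le {V : Set E} (hV : IsOpen V) {f : E → F} (h : ContDiffOn ℝ ∞ f V) (e : E)
    {x : E} (hx : x ∈ V) (j : ℕ) :
    ‖iteratedFDeriv ℝ j (dd e f) x‖ ≤ ‖e‖ * ‖iteratedFDeriv ℝ (j + 1) f x‖ := by
  have := ((contDiffOn_infty_iff_fderiv_of_isOpen hV).1 h).2.contDiffAt (hV.mem_nhds hx)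
  rw [← norm_iteratedFDeriv_fderiv]
  exact norm_iteratedFDeriv_clm_apply_const this (N := ∞) (by exact_mod_cast le_top)

/-- Normally convergent (with all derivatives) families of smooth functions. -/
def NC (V : Set E) (u : ℕ → E → F) : Prop :=
  (∀ k, ContDiffOn ℝ ∞ (u k) V) ∧ ∀ x ∈ V, ∃ U ∈ 𝓝 x, ∀ j : ℕ, ∃ C : ℝ, ∀ k : ℕ, ∀ y ∈ U,
    ‖iteratedFDeriv ℝ j (u k) y‖ ≤ C * (1 / 2) ^ k

theorem NC.dd {V : Set E} (hV : IsOpen V) {u : ℕ → E → F} (h : NC V u) (e : E) :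
    NC V (fun k => GPSM.dd e (u k)) := by
  refine ⟨fun k => dd_contDiffOn hV (h.1 k) e, fun x hx => ?_⟩
  obtain ⟨U, hU, hb⟩ := h.2 x hx
  refine ⟨U ∩ V, inter_mem hU (hV.mem_nhds hx), fun j => ?_⟩
  obtain ⟨C, hC⟩ := hb (j + 1)
  refine ⟨‖e‖ * C, fun k y hy => ?_⟩
  refine (norm_iter_dd_le hV (h.1 k) e hy.2 j).trans ?_
  rw [mul_assoc]
  exact mul_le_mul_of_nonneg_left (hC k y hy.1) (norm_nonneg _)

theorem summable_half (C : ℝ) : Summable (fun k : ℕ => C * (1 / 2 : ℝ) ^ k) :=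
  (summable_geometric_of_lt_one (by norm_num) (by norm_num)).mul_left C

theorem NC.summable [CompleteSpace F] {V : Set E} {u : ℕ → E → F} (h : NC V u) {x : E} (hx : x ∈ V) :
    Summable (fun k => u k x) := by
  obtain ⟨U, hU, hb⟩ := h.2 x hx
  obtain ⟨C, hC⟩ := hb 0
  refine Summable.of_norm_bounded (summable_half C) (fun k => ?_)
  simpa using hC k x (mem_of_mem_nhds hU)

theorem NC.summable_fderiv [CompleteSpace F] {V : Set E} {u : ℕ → E → F} (h : NC V u) {x : E}
    (hx : x ∈ V) : Summable (fun k => fderiv ℝ (u k) x) := by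
  obtain ⟨U, hU, hb⟩ := h.2 x hx
  obtain ⟨C, hC⟩ := hb 1
  refine Summable.of_norm_bounded (summable_half C) (fun k => ?_)
  simpa [norm_iteratedFDeriv_one] using hC k x (mem_of_mem_nhds hU)

theorem NC.hasFDerivAt [CompleteSpace F] {V : Set E} (hV : IsOpen V) {u : ℕ → E → F} (h : NC V u)
    {x : E} (hx : x ∈ V) :
    HasFDerivAt (fun y => ∑' k, u k y) (∑' k, fderiv ℝ (u k) x) x := by
  obtain ⟨U, hU, hb⟩ := h.2 x hx
  obtain ⟨C, hC⟩ := hb 1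
  obtain ⟨ε, hε, hball⟩ := Metric.mem_nhds_iff.1 (inter_mem hU (hV.mem_nhds hx))
  refine hasFDerivAt_tsum_of_isPreconnected (summable_half C) Metric.isOpen_ball
    (convex_ball x ε).isPreconnected (fun k y hy => ?_) (fun k y hy => ?_)
    (Metric.mem_ball_self hε) (h.summable hx) (Metric.mem_ball_self hε)
  · have := (h.1 k).contDiffAt (hV.mem_nhds (hball hy).2)
    exact (this.differentiableAt (by simp)).hasFDerivAt
  · simpa [norm_iteratedFDeriv_one] using hC k y (hball hy).1

theorem NC.hasSum_dd [CompleteSpace F] {V : Set E} (hV : IsOpen V) {u : ℕ → E → F} (h : NC V u)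
    {x : E} (hx : x ∈ V) (e : E) :
    HasSum (fun k => GPSM.dd e (u k) x) (GPSM.dd e (fun y => ∑' k, u k y) x) := by
  have h1 := (h.summable_fderiv hx).hasSum
  have h2 := (ContinuousLinearMap.apply ℝ F e).hasSum h1
  simp only [ContinuousLinearMap.apply_apply] at h2
  simpa only [GPSM.dd, (h.hasFDerivAt hV hx).fderiv] using h2

theorem NC.eqOn_dd [CompleteSpace F] {V : Set E} (hV : IsOpen V) {u : ℕ → E → F} (h : NC V u)
    (e : E) :
    Set.EqOn (GPSM.dd e (fun y => ∑' k, u k y)) (fun x => ∑' k, GPSM.dd e (u k) x) V :=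
  fun _ hx => (h.hasSum_dd hV hx e).tsum_eq.symm

theorem NC.hasSum_dd_dd [CompleteSpace F] {V : Set E} (hV : IsOpen V) {u : ℕ → E → F} (h : NC V u)
    {x : E} (hx : x ∈ V) (e e' : E) :
    HasSum (fun k => GPSM.dd e' (GPSM.dd e (u k)) x)
      (GPSM.dd e' (GPSM.dd e (fun y => ∑' k, u k y)) x) := by
  rw [dd_congr hV (h.eqOn_dd hV e) e' hx]
  exact (h.dd hV e).hasSum_dd hV hx e'

theorem NC.contDiffOn_nat [CompleteSpace F] [FiniteDimensional ℝ E] {V : Set E} (hV : IsOpen V)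
    (n : ℕ) : ∀ {u : ℕ → E → F}, NC V u → ContDiffOn ℝ n (fun y => ∑' k, u k y) V := by
  induction n with
  | zero =>
    intro u h
    rw [Nat.cast_zero, contDiffOn_zero]
    exact fun x hx => (h.hasFDerivAt hV hx).continuousAt.continuousWithinAt
  | succ n ih =>
    intro u h
    rw [Nat.cast_succ, contDiffOn_succ_iff_fderiv_of_isOpen hV]
    refine ⟨fun x hx => (h.hasFDerivAt hV hx).differentiableAt.differentiableWithinAt,
      by simp, ?_⟩
    rw [contDiffOn_clm_apply]
    intro e
    exact (ih (h.dd hV e)).congr (h.eqOn_dd hV e)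

theorem NC.contDiffOn [CompleteSpace F] [FiniteDimensional ℝ E] {V : Set E} (hV : IsOpen V)
    {u : ℕ → E → F} (h : NC V u) : ContDiffOn ℝ ∞ (fun y => ∑' k, u k y) V :=
  contDiffOn_infty.2 fun n => h.contDiffOn_nat hV n

end Analysis

section Series
open scoped ContDiff NNReal ENNReal

variable {A : Type*} [NormedAddCommGroup A] [NormedSpace ℝ A]

theorem norm_iter_lapP_le {p : ℕ} {V : Set (Fin (p + 1) → ℝ)} (hV : IsOpen V)
    {g : (Fin (p + 1) → ℝ) → A} (h : ContDiffOn ℝ ∞ g V) {y : Fin (p + 1) → ℝ} (hy : y ∈ V)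
    (j : ℕ) :
    ‖iteratedFDeriv ℝ j (lapP p g) y‖ ≤ (p + 1) * ‖iteratedFDeriv ℝ (j + 2) g y‖ := by
  have h1 : lapP p g = fun z => ∑ s : Fin (p + 1), dd (Pi.single s 1) (dd (Pi.single s 1) g) z :=
    rfl
  rw [h1, iteratedFDeriv_fun_sum_apply]
  · refine (norm_sum_le _ _).trans ?_
    have : ∀ s ∈ (Finset.univ : Finset (Fin (p + 1))),
        ‖iteratedFDeriv ℝ j (dd (Pi.single s (1 : ℝ)) (dd (Pi.single s (1 : ℝ)) g)) y‖ ≤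
          ‖iteratedFDeriv ℝ (j + 2) g y‖ := by
      intro s _
      have e1 : ‖(Pi.single s (1 : ℝ) : Fin (p + 1) → ℝ)‖ = 1 := by
        simpa using Pi.norm_single (ι := Fin (p + 1)) (G := fun _ => ℝ) (i := s) (1 : ℝ)
      refine (norm_iter_dd_le hV (dd_contDiffOn hV h _) _ hy j).trans ?_
      rw [e1, one_mul]
      refine (norm_iter_dd_le hV h _ hy (j + 1)).trans ?_
      rw [e1, one_mul]
    refine (Finset.sum_le_sum this).trans ?_
    simp
  · intro s _
    exact ((dd_contDiffOn hV (dd_contDiffOn hV h _) _).contDiffAt (hV.mem_nhds hy)).of_le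
      (by exact_mod_cast le_top)

theorem lapP_contDiffOn {p : ℕ} {V : Set (Fin (p + 1) → ℝ)} (hV : IsOpen V)
    {g : (Fin (p + 1) → ℝ) → A} (h : ContDiffOn ℝ ∞ g V) : ContDiffOn ℝ ∞ (lapP p g) V :=
  ContDiffOn.sum fun s _ => dd_contDiffOn hV (dd_contDiffOn hV h (Pi.single s 1)) (Pi.single s 1)

theorem lapIterP_succ {p : ℕ} (k : ℕ) (g : (Fin (p + 1) → ℝ) → A) :
    lapIterP p (k + 1) g = lapP p (lapIterP p k g) := by
  simp only [lapIterP, Function.iterate_succ_apply']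

theorem lapIterP_contDiffOn {p : ℕ} {V : Set (Fin (p + 1) → ℝ)} (hV : IsOpen V)
    {g : (Fin (p + 1) → ℝ) → A} (h : ContDiffOn ℝ ∞ g V) (k : ℕ) :
    ContDiffOn ℝ ∞ (lapIterP p k g) V := by
  induction k with
  | zero => exact h
  | succ k ih => rw [lapIterP_succ]; exact lapP_contDiffOn hV ih

theorem norm_iter_lapIterP_le {p : ℕ} {V : Set (Fin (p + 1) → ℝ)} (hV : IsOpen V)
    {g : (Fin (p + 1) → ℝ) → A} (h : ContDiffOn ℝ ∞ g V) {y : Fin (p + 1) → ℝ} (hy : y ∈ V)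
    (k : ℕ) : ∀ j : ℕ,
    ‖iteratedFDeriv ℝ j (lapIterP p k g) y‖ ≤
      (p + 1) ^ k * ‖iteratedFDeriv ℝ (2 * k + j) g y‖ := by
  induction k with
  | zero => 
    intro j
    have e : 2 * 0 + j = j := by omega
    rw [e]; simp [lapIterP]
  | succ k ih =>
    intro j
    rw [lapIterP_succ]
    refine (norm_iter_lapP_le hV (lapIterP_contDiffOn hV h k) hy j).trans ?_
    have e : 2 * (k + 1) + j = 2 * k + (j + 2) := by ring
    rw [e, pow_succ', mul_assoc]
    exact mul_le_mul_of_nonneg_left (ih _) (by positivity)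

/-- General term of the series. -/
noncomputable def useq (p : ℕ) (c : ℕ → ℝ) (g : (Fin (p + 1) → ℝ) → A) (k : ℕ)
    (z : (Fin (p + 1) → ℝ) × ℝ) : A := c k • (z.2 ^ k • lapIterP p k g z.1)

theorem norm_iter_comp_fst_le {p : ℕ} {V : Set (Fin (p + 1) → ℝ)} (hV : IsOpen V)
    {g : (Fin (p + 1) → ℝ) → A} (h : ContDiffOn ℝ ∞ g V) {z : (Fin (p + 1) → ℝ) × ℝ}
    (hz : z.1 ∈ V) (j : ℕ) :
    ‖iteratedFDeriv ℝ j (fun z : (Fin (p + 1) → ℝ) × ℝ => g z.1) z‖ ≤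
      ‖iteratedFDeriv ℝ j g z.1‖ := by
  let π := ContinuousLinearMap.fst ℝ (Fin (p + 1) → ℝ) ℝ
  have hV' : IsOpen (π ⁻¹' V) := hV.preimage π.continuous
  have h1 := π.iteratedFDerivWithin_comp_right h hV.uniqueDiffOn hV'.uniqueDiffOn (x := z) hz
    (i := j) (by exact_mod_cast le_top)
  rw [iteratedFDerivWithin_of_isOpen j hV' hz,
    iteratedFDerivWithin_of_isOpen j hV (show π z ∈ V from hz)] at h1
  change ‖iteratedFDeriv ℝ j (g ∘ π) z‖ ≤ _
  rw [h1]
  refine (ContinuousMultilinearMap.norm_compContinuousLinearMap_le _ _).trans ?_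
  have : ∏ _i : Fin j, ‖π‖ ≤ 1 := by
    refine Finset.prod_le_one (fun _ _ => norm_nonneg _) (fun _ _ => ?_)
    exact ContinuousLinearMap.norm_fst_le _ _ _
  exact mul_le_of_le_one_right (norm_nonneg _) this

theorem norm_iter_pow_snd_le {p : ℕ} (k j : ℕ) {ε : ℝ} (hε : 0 < ε)
    {z : (Fin (p + 1) → ℝ) × ℝ} (hz : |z.2| ≤ ε) :
    ‖iteratedFDeriv ℝ j (fun z : (Fin (p + 1) → ℝ) × ℝ => z.2 ^ k) z‖ ≤
      (j.factorial * (ε⁻¹) ^ j) * (2 * ε) ^ k := by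
  let π := ContinuousLinearMap.snd ℝ (Fin (p + 1) → ℝ) ℝ
  have h1 := π.iteratedFDeriv_comp_right (f := fun t : ℝ => t ^ k) (n := ∞)
    (contDiff_id.pow k) z (i := j) (by exact_mod_cast le_top)
  change ‖iteratedFDeriv ℝ j ((fun t : ℝ => t ^ k) ∘ π) z‖ ≤ _
  rw [h1]
  refine (ContinuousMultilinearMap.norm_compContinuousLinearMap_le _ _).trans ?_
  have : ∏ _i : Fin j, ‖π‖ ≤ 1 := by
    refine Finset.prod_le_one (fun _ _ => norm_nonneg _) (fun _ _ => ?_)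
    exact ContinuousLinearMap.norm_snd_le _ _ _
  refine (mul_le_of_le_one_right (norm_nonneg _) this).trans ?_
  rw [norm_iteratedFDeriv_eq_norm_iteratedDeriv, iteratedDeriv_pow]
  change ‖(k.descFactorial j : ℝ) * z.2 ^ (k - j)‖ ≤ _
  rw [norm_mul, norm_pow, Real.norm_eq_abs, Real.norm_eq_abs, Nat.abs_cast]
  rcases lt_or_ge k j with hkj | hkj
  · rw [Nat.descFactorial_eq_zero_iff_lt.2 hkj]
    simp only [Nat.cast_zero, zero_mul]
    positivity
  · have h2 : ((k.descFactorial j : ℕ) : ℝ) ≤ j.factorial * 2 ^ k := by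
      rw [Nat.descFactorial_eq_factorial_mul_choose]
      have := Nat.choose_le_two_pow k j
      push_cast
      gcongr
      exact_mod_cast this
    calc (k.descFactorial j : ℝ) * |z.2| ^ (k - j) ≤ (j.factorial * 2 ^ k) * ε ^ (k - j) := by
          gcongr
      _ = _ := by
          rw [pow_sub₀ _ hε.ne' hkj, mul_pow, inv_pow]; ring

theorem useq_contDiffOn {p : ℕ} {V : Set (Fin (p + 1) → ℝ)} (hV : IsOpen V)
    {g : (Fin (p + 1) → ℝ) → A} (h : ContDiffOn ℝ ∞ g V) (c : ℕ → ℝ) (k : ℕ) :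
    ContDiffOn ℝ ∞ (useq p c g k) (Prod.fst ⁻¹' V) := by
  have h1 := (lapIterP_contDiffOn hV h k).comp_continuousLinearMap
    (ContinuousLinearMap.fst ℝ (Fin (p + 1) → ℝ) ℝ)
  exact ((contDiff_snd.pow k).contDiffOn.smul h1).const_smul (c k)

theorem useq_NC_local [CompleteSpace A] {p : ℕ} {Ω₀ : Set (Fin (p + 1) → ℝ)} (hΩ₀ : IsOpen Ω₀)
    {g : (Fin (p + 1) → ℝ) → A} (h : AnalyticOnNhd ℝ g Ω₀) {y₀ : Fin (p + 1) → ℝ}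
    (hy₀ : y₀ ∈ Ω₀) :
    ∃ ε > 0, Metric.ball y₀ ε ⊆ Ω₀ ∧ ∀ c : ℕ → ℝ, (∀ k, |c k| * (2 * k).factorial ≤ 1) →
      NC (Metric.ball (y₀, (0 : ℝ)) ε) (useq p c g) := by
  obtain ⟨ε₁, hε₁, C, R, hC, hR, hb⟩ := analytic_bound (h y₀ hy₀)
  obtain ⟨ε₂, hε₂, hball⟩ := Metric.isOpen_iff.1 hΩ₀ y₀ hy₀
  set ε₃ : ℝ := (16 * (p + 1) * R ^ 2)⁻¹ with hε₃
  have hε₃0 : 0 < ε₃ := by positivity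
  set ε := min ε₁ (min ε₂ ε₃) with hεdef
  have hε : 0 < ε := lt_min hε₁ (lt_min hε₂ hε₃0)
  have hεε₁ : ε ≤ ε₁ := min_le_left _ _
  have hεε₂ : ε ≤ ε₂ := (min_le_right _ _).trans (min_le_left _ _)
  have hεε₃ : ε ≤ ε₃ := (min_le_right _ _).trans (min_le_right _ _)
  have hsub : Metric.ball y₀ ε ⊆ Ω₀ := (Metric.ball_subset_ball hεε₂).trans hball
  have hg : ContDiffOn ℝ ∞ g Ω₀ := h.contDiffOn hΩ₀.uniqueDiffOn
  have hfst : ∀ z ∈ Metric.ball (y₀, (0 : ℝ)) ε, z.1 ∈ Metric.ball y₀ ε ∧ |z.2| ≤ ε := by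
    intro z hz
    rw [← ball_prod_same] at hz
    refine ⟨hz.1, ?_⟩
    have := hz.2
    rw [Metric.mem_ball, Real.dist_eq, sub_zero] at this
    exact this.le
  have hquart : 2 * ε * ((p + 1) * R ^ 2 * 4) ≤ 1 / 2 := by
    have : 2 * ε * ((p + 1) * R ^ 2 * 4) ≤ 2 * ε₃ * ((p + 1) * R ^ 2 * 4) := by gcongr
    refine this.trans (le_of_eq ?_)
    rw [hε₃]; field_simp; norm_num
  refine ⟨ε, hε, hsub, fun c hc => ⟨fun k => ?_, fun x hx => ?_⟩⟩
  · exact (useq_contDiffOn hΩ₀ hg c k).mono fun z hz => hsub (hfst z hz).1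
  · set B := Metric.ball (y₀, (0 : ℝ)) ε with hB
    have hBo : IsOpen B := Metric.isOpen_ball
    refine ⟨B, hBo.mem_nhds hx, fun j => ?_⟩
    refine ⟨∑ i ∈ Finset.range (j + 1), (j.choose i : ℝ) * (i.factorial * (ε⁻¹) ^ i) *
      (C * R ^ (j - i) * 2 ^ (j - i) * (j - i).factorial), fun k z hz => ?_⟩
    have hz1 := (hfst z hz).1
    have hz2 := (hfst z hz).2
    have c1 : ContDiffOn ℝ ∞ (fun z : (Fin (p + 1) → ℝ) × ℝ => z.2 ^ k) B :=
      (contDiff_snd.pow k).contDiffOn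
    have c2 : ContDiffOn ℝ ∞ (fun z : (Fin (p + 1) → ℝ) × ℝ => lapIterP p k g z.1) B :=
      ((lapIterP_contDiffOn hΩ₀ hg k).comp_continuousLinearMap
        (ContinuousLinearMap.fst ℝ (Fin (p + 1) → ℝ) ℝ)).mono fun z hz => hsub (hfst z hz).1
    have e1 : iteratedFDeriv ℝ j (useq p c g k) z = c k • iteratedFDeriv ℝ j
        (fun z : (Fin (p + 1) → ℝ) × ℝ => z.2 ^ k • lapIterP p k g z.1) z :=
      iteratedFDeriv_const_smul_apply'
        (((c1.smul c2).contDiffAt (hBo.mem_nhds hz)).of_le (by exact_mod_cast le_top))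
    have e2 := norm_iteratedFDerivWithin_smul_le c1 c2 hBo.uniqueDiffOn hz (n := j)
      (by exact_mod_cast le_top)
    simp only [iteratedFDerivWithin_of_isOpen _ hBo hz] at e2
    rw [e1, norm_smul, Real.norm_eq_abs]
    refine (mul_le_mul_of_nonneg_left e2 (abs_nonneg _)).trans ?_
    rw [Finset.mul_sum, Finset.sum_mul]
    refine Finset.sum_le_sum fun i _ => ?_
    set l := j - i with hl
    have b1 := norm_iter_pow_snd_le (p := p) k i hε hz2
    have b2 : ‖iteratedFDeriv ℝ l (fun z : (Fin (p + 1) → ℝ) × ℝ => lapIterP p k g z.1) z‖ ≤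
        (p + 1) ^ k * (C * R ^ (2 * k + l) * (2 * k + l).factorial) := by
      refine (norm_iter_comp_fst_le hΩ₀ (lapIterP_contDiffOn hΩ₀ hg k) (hsub hz1) l).trans ?_
      refine (norm_iter_lapIterP_le hΩ₀ hg (hsub hz1) k l).trans ?_
      gcongr
      exact hb _ (Metric.ball_subset_ball hεε₁ hz1) _
    have b3 : ((2 * k + l).factorial : ℝ) ≤ (2 * k).factorial * (2 ^ (2 * k + l) * l.factorial) := by
      have h1 := Nat.add_choose_mul_factorial_mul_factorial (2 * k) l
      have h2 := Nat.choose_le_two_pow (2 * k + l) l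
      have h3 : (2 * k + l).factorial ≤ (2 * k).factorial * (2 ^ (2 * k + l) * l.factorial) := by
        rw [← h1]
        calc _ ≤ 2 ^ (2 * k + l) * (2 * k).factorial * l.factorial := by gcongr
          _ = _ := by ring
      exact_mod_cast h3
    calc |c k| * ((j.choose i : ℝ) * ‖iteratedFDeriv ℝ i (fun z : (Fin (p + 1) → ℝ) × ℝ => z.2 ^ k) z‖
          * ‖iteratedFDeriv ℝ l (fun z : (Fin (p + 1) → ℝ) × ℝ => lapIterP p k g z.1) z‖)
        ≤ |c k| * ((j.choose i : ℝ) * ((i.factorial * (ε⁻¹) ^ i) * (2 * ε) ^ k)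
          * ((p + 1) ^ k * (C * R ^ (2 * k + l) *
            ((2 * k).factorial * (2 ^ (2 * k + l) * l.factorial))))) := by
          gcongr
          exact b2.trans (by gcongr)
      _ = (|c k| * (2 * k).factorial) * ((j.choose i : ℝ) * (i.factorial * (ε⁻¹) ^ i) *
          (C * R ^ l * 2 ^ l * l.factorial) * (2 * ε * ((p + 1) * R ^ 2 * 4)) ^ k) := by
          have : (4 : ℝ) ^ k = 2 ^ (2 * k) := by rw [pow_mul]; norm_num
          have h2 : (2 * ε * ((p + 1) * R ^ 2 * 4)) ^ k =
              (2 * ε) ^ k * ((p + 1) ^ k * R ^ (2 * k) * 2 ^ (2 * k)) := by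
            simp only [mul_pow, this, pow_mul R]
          rw [h2]
          ring
      _ ≤ 1 * ((j.choose i : ℝ) * (i.factorial * (ε⁻¹) ^ i) *
          (C * R ^ l * 2 ^ l * l.factorial) * (1 / 2) ^ k) := by
          gcongr
          exact hc k
      _ = _ := by ring

end Series

section Rules
open scoped ContDiff NNReal ENNReal

variable {E F G : Type*} [NormedAddCommGroup E] [NormedSpace ℝ E]
  [NormedAddCommGroup F] [NormedSpace ℝ F] [NormedAddCommGroup G] [NormedSpace ℝ G]

theorem diffAt_of {V : Set E} (hV : IsOpen V) {f : E → F} (h : ContDiffOn ℝ ∞ f V) {x : E}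
    (hx : x ∈ V) : DifferentiableAt ℝ f x :=
  (h.contDiffAt (hV.mem_nhds hx)).differentiableAt (by simp)

theorem dd_comm {V : Set E} (hV : IsOpen V) {f : E → F} (h : ContDiffOn ℝ ∞ f V) (e e' : E) :
    Set.EqOn (dd e (dd e' f)) (dd e' (dd e f)) V := by
  intro x hx
  have h1 := ((contDiffOn_infty_iff_fderiv_of_isOpen hV).1 h).2
  have h2 : DifferentiableAt ℝ (fderiv ℝ f) x := diffAt_of hV h1 hx
  have key : ∀ a b : E, dd a (dd b f) x = fderiv ℝ (fderiv ℝ f) x a b := by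
    intro a b
    have := h2.hasFDerivAt.clm_apply (hasFDerivAt_const b x)
    have h3 : HasFDerivAt (dd b f) _ x := this
    simp only [dd] at h3 ⊢
    rw [h3.fderiv]
    simp
  rw [key, key]
  have hs : IsSymmSndFDerivAt ℝ f x :=
    (h.contDiffAt (hV.mem_nhds hx)).isSymmSndFDerivAt (by
      simp only [minSmoothness_of_isRCLikeNormedField]
      exact WithTop.coe_le_coe.2 (le_top (a := (2 : ℕ∞))))
  exact hs e e'

theorem dd_add {f g : E → F} {x : E} (hf : DifferentiableAt ℝ f x) (hg : DifferentiableAt ℝ g x)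
    (e : E) : dd e (fun y => f y + g y) x = dd e f x + dd e g x := by
  simp only [dd]; rw [fderiv_fun_add hf hg]; rfl

theorem dd_sum {ι : Type*} {u : Finset ι} {f : ι → E → F} {x : E}
    (hf : ∀ i ∈ u, DifferentiableAt ℝ (f i) x) (e : E) :
    dd e (fun y => ∑ i ∈ u, f i y) x = ∑ i ∈ u, dd e (f i) x := by
  simp only [dd]; rw [fderiv_fun_sum hf]; simp

theorem dd_clm (J : F →L[ℝ] G) {f : E → F} {x : E} (hf : DifferentiableAt ℝ f x) (e : E) :
    dd e (fun y => J (f y)) x = J (dd e f x) := by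
  simp only [dd]
  have : HasFDerivAt (fun y => J (f y)) (J.comp (fderiv ℝ f x)) x :=
    J.hasFDerivAt.comp x hf.hasFDerivAt
  rw [this.fderiv]; rfl

theorem dd_smul {c : E → ℝ} {f : E → F} {x : E} (hc : DifferentiableAt ℝ c x)
    (hf : DifferentiableAt ℝ f x) (e : E) :
    dd e (fun y => c y • f y) x = c x • dd e f x + dd e c x • f x := by
  simp only [dd]; rw [fderiv_fun_smul hc hf]; simp

theorem dd_const_smul (c : ℝ) {f : E → F} {x : E}
    (hf : DifferentiableAt ℝ f x) (e : E) :
    dd e (fun y => c • f y) x = c • dd e f x := by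
  simp only [dd]; rw [fderiv_fun_const_smul hf]; simp

end Rules

section PDE
open scoped ContDiff NNReal ENNReal
variable {A : Type*} [NormedAddCommGroup A] [NormedSpace ℝ A]

/-- spatial basis vector of the stem space -/
def ey (p : ℕ) (s : Fin (p + 1)) : (Fin (p + 1) → ℝ) × ℝ := (Pi.single s 1, 0)
/-- last basis vector of the stem space -/
def et (p : ℕ) : (Fin (p + 1) → ℝ) × ℝ := (0, 1)

/-- monomial in the last variable -/
def mon (p : ℕ) (c : ℝ) (k : ℕ) (h : (Fin (p + 1) → ℝ) → A) (z : (Fin (p + 1) → ℝ) × ℝ) : A :=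
  (c * z.2 ^ k) • h z.1

theorem useq_eq_mon (p : ℕ) (c : ℕ → ℝ) (g : (Fin (p + 1) → ℝ) → A) (k : ℕ) :
    useq p c g k = mon p (c k) k (lapIterP p k g) := by
  funext z; simp [useq, mon, smul_smul]

theorem mon_hasFDerivAt {p : ℕ} (c : ℝ) (k : ℕ) {h : (Fin (p + 1) → ℝ) → A}
    {z : (Fin (p + 1) → ℝ) × ℝ} (hh : DifferentiableAt ℝ h z.1) (e : (Fin (p + 1) → ℝ) × ℝ) :
    dd e (mon p c k h) z = (c * z.2 ^ k) • dd e.1 h z.1 + (c * (k * z.2 ^ (k - 1) * e.2)) • h z.1 := by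
  have h1 : HasFDerivAt (fun z : (Fin (p + 1) → ℝ) × ℝ => h z.1)
      ((fderiv ℝ h z.1).comp (ContinuousLinearMap.fst ℝ _ _)) z :=
    hh.hasFDerivAt.comp z hasFDerivAt_fst
  have h2 : HasFDerivAt (fun z : (Fin (p + 1) → ℝ) × ℝ => c * z.2 ^ k)
      (c • ((k * z.2 ^ (k - 1)) • ContinuousLinearMap.snd ℝ (Fin (p + 1) → ℝ) ℝ)) z := by
    have := ((hasDerivAt_pow k z.2).comp_hasFDerivAt z
      (hasFDerivAt_snd (𝕜 := ℝ) (E := Fin (p + 1) → ℝ) (F := ℝ) (p := z))).const_mul c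
    exact this
  have h3 : HasFDerivAt (mon p c k h) _ z := h2.smul h1
  simp only [dd]
  rw [h3.fderiv]
  simp

theorem mon_dd_et {p : ℕ} (c : ℝ) (k : ℕ) {h : (Fin (p + 1) → ℝ) → A}
    {V : Set (Fin (p + 1) → ℝ)} (hV : IsOpen V) (hh : ContDiffOn ℝ ∞ h V) :
    Set.EqOn (dd (et p) (mon p c k h)) (mon p (c * k) (k - 1) h) (Prod.fst ⁻¹' V) := by
  intro z hz
  rw [mon_hasFDerivAt c k (diffAt_of hV hh hz)]
  simp [et, mon, dd]; ring_nf

theorem mon_dd_ey {p : ℕ} (c : ℝ) (k : ℕ) {h : (Fin (p + 1) → ℝ) → A}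
    {V : Set (Fin (p + 1) → ℝ)} (hV : IsOpen V) (hh : ContDiffOn ℝ ∞ h V) (s : Fin (p + 1)) :
    Set.EqOn (dd (ey p s) (mon p c k h)) (mon p c k (dd (Pi.single s 1) h)) (Prod.fst ⁻¹' V) := by
  intro z hz
  rw [mon_hasFDerivAt c k (diffAt_of hV hh hz)]
  simp [ey, mon, dd]

/-- the second order operator on the stem space -/
noncomputable def EE (p : ℕ) (α : ℝ) (Φ : (Fin (p + 1) → ℝ) × ℝ → A)
    (z : (Fin (p + 1) → ℝ) × ℝ) : A :=
  (4 * z.2) • dd (et p) (dd (et p) Φ) z + α • dd (et p) Φ z +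
    ∑ s : Fin (p + 1), dd (ey p s) (dd (ey p s) Φ) z

theorem hasSum_shift {f : ℕ → A} {S : A} (h : HasSum f S) (h0 : f 0 = 0) :
    HasSum (fun k => f (k + 1)) S := by
  rw [← hasSum_nat_add_iff' 1] at h
  simpa [h0] using h

theorem EE_series [CompleteSpace A] {p : ℕ} {V : Set (Fin (p + 1) → ℝ)} (hV : IsOpen V)
    {W : Set ((Fin (p + 1) → ℝ) × ℝ)} (hW : IsOpen W) (hWV : W ⊆ Prod.fst ⁻¹' V)
    {g : (Fin (p + 1) → ℝ) → A} (hg : ContDiffOn ℝ ∞ g V) {c : ℕ → ℝ} {α : ℝ}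
    (hN : NC W (useq p c g)) (hc : ∀ k : ℕ, (k + 1) * (4 * k + α) * c (k + 1) = - c k) :
    ∀ z ∈ W, EE p α (fun z => ∑' k, useq p c g k z) z = 0 := by
  intro z hz
  have hV' : IsOpen (Prod.fst ⁻¹' V : Set ((Fin (p + 1) → ℝ) × ℝ)) := hV.preimage continuous_fst
  have hz' := hWV hz
  have h1 := ((hN.hasSum_dd_dd hW hz (et p) (et p)).const_smul (4 * z.2)).add
    ((hN.hasSum_dd hW hz (et p)).const_smul α)
  have h2 := hasSum_sum (s := (Finset.univ : Finset (Fin (p + 1)))) fun s _ =>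
    hN.hasSum_dd_dd hW hz (ey p s) (ey p s)
  have t1 : ∀ k, dd (et p) (useq p c g k) z = mon p (c k * k) (k - 1) (lapIterP p k g) z :=
    fun k => by rw [useq_eq_mon]; exact mon_dd_et _ _ hV (lapIterP_contDiffOn hV hg k) hz'
  have t2 : ∀ k, dd (et p) (dd (et p) (useq p c g k)) z =
      mon p (c k * k * ((k - 1 : ℕ) : ℝ)) (k - 1 - 1) (lapIterP p k g) z := fun k => by
    rw [useq_eq_mon, dd_congr hV' (mon_dd_et _ _ hV (lapIterP_contDiffOn hV hg k)) _ hz']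
    exact mon_dd_et _ _ hV (lapIterP_contDiffOn hV hg k) hz'
  have t3 : ∀ k, ∑ s, dd (ey p s) (dd (ey p s) (useq p c g k)) z =
      mon p (c k) k (lapIterP p (k + 1) g) z := fun k => by
    have : ∀ s, dd (ey p s) (dd (ey p s) (useq p c g k)) z =
        mon p (c k) k (dd (Pi.single s 1) (dd (Pi.single s 1) (lapIterP p k g))) z := fun s => by
      have hk := lapIterP_contDiffOn hV hg k
      rw [useq_eq_mon, dd_congr hV' (mon_dd_ey _ _ hV hk s) _ hz']
      exact mon_dd_ey _ _ hV (dd_contDiffOn hV hk _) s hz'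
    simp only [this, mon]
    rw [← Finset.smul_sum, lapIterP_succ]; rfl
  have h3 := hasSum_shift h1 (by simp [t1, t2, mon])
  have h4 : HasSum (fun k => - ∑ s, dd (ey p s) (dd (ey p s) (useq p c g k)) z)
      ((4 * z.2) • dd (et p) (dd (et p) fun y => ∑' (k : ℕ), useq p c g k y) z +
      α • dd (et p) (fun y => ∑' (k : ℕ), useq p c g k y) z) := by
    convert h3 using 1
    funext k
    rw [t1, t2, t3]
    simp only [mon, smul_smul, ← add_smul, ← neg_smul]
    congr 1
    have := hc k
    rcases k with _ | k
    · simp at this ⊢; linarith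
    · simp only [Nat.add_sub_cancel, pow_succ]
      push_cast at this ⊢
      linear_combination -(z.2 ^ k * z.2) * this
  have h5 := h4.unique h2.neg
  simp only [EE]
  rw [h5]; simp

theorem EE_dt {p : ℕ} {W : Set ((Fin (p + 1) → ℝ) × ℝ)} (hW : IsOpen W) {α : ℝ}
    {Φ : (Fin (p + 1) → ℝ) × ℝ → A} (hΦ : ContDiffOn ℝ ∞ Φ W) (h : ∀ z ∈ W, EE p α Φ z = 0) :
    ∀ z ∈ W, EE p (α + 4) (dd (et p) Φ) z = 0 := by
  intro z hz
  have hEq : Set.EqOn (EE p α Φ) (fun _ => 0) W := h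
  have h0 := dd_congr hW hEq (et p) hz
  have z0 : dd (et p) (fun _ : (Fin (p + 1) → ℝ) × ℝ => (0 : A)) z = 0 := by simp [dd]
  rw [z0] at h0
  have d1 := dd_contDiffOn hW hΦ (et p)
  have d2 := dd_contDiffOn hW d1 (et p)
  have ds := fun s => dd_contDiffOn hW hΦ (ey p s)
  have dss := fun s => dd_contDiffOn hW (ds s) (ey p s)
  have c4 : DifferentiableAt ℝ (fun z : (Fin (p + 1) → ℝ) × ℝ => 4 * z.2) z := by fun_prop
  have dc4 : dd (et p) (fun z : (Fin (p + 1) → ℝ) × ℝ => 4 * z.2) z = 4 := by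
    have : HasFDerivAt (fun z : (Fin (p + 1) → ℝ) × ℝ => 4 * z.2)
      ((4 : ℝ) • ContinuousLinearMap.snd ℝ (Fin (p + 1) → ℝ) ℝ) z := hasFDerivAt_snd.const_mul 4
    simp [dd, this.fderiv, et]
  have e1 : dd (et p) (EE p α Φ) z =
      (4 * z.2) • dd (et p) (dd (et p) (dd (et p) Φ)) z + (4 : ℝ) • dd (et p) (dd (et p) Φ) z
      + α • dd (et p) (dd (et p) Φ) z +
      ∑ s, dd (et p) (dd (ey p s) (dd (ey p s) Φ)) z := by
    have hd1 := diffAt_of hW d1 hz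
    have hd2 := diffAt_of hW d2 hz
    have hds : ∀ s ∈ Finset.univ, _ := fun s (_ : s ∈ Finset.univ) => diffAt_of hW (dss s) hz
    unfold EE
    rw [dd_add ((c4.fun_smul hd2).fun_add (hd1.fun_const_smul α)) (DifferentiableAt.fun_sum hds),
      dd_add (c4.fun_smul hd2) (hd1.fun_const_smul α), dd_smul c4 hd2, dd_const_smul α hd1,
      dd_sum hds, dc4]
  rw [e1] at h0
  have e2 : ∀ s, dd (et p) (dd (ey p s) (dd (ey p s) Φ)) z =
      dd (ey p s) (dd (ey p s) (dd (et p) Φ)) z := fun s => by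
    rw [dd_comm hW (ds s) _ _ hz]
    exact dd_congr hW (dd_comm hW hΦ _ _) _ hz
  simp only [e2] at h0
  rw [← h0, EE, add_smul]
  abel

/-- the generalized Dirac operator -/
noncomputable def DJ {p : ℕ} (J : Fin (p + 1) → A →L[ℝ] A) (g : (Fin (p + 1) → ℝ) → A)
    (y : Fin (p + 1) → ℝ) : A := ∑ s, J s (dd (Pi.single s 1) g y)

theorem DJ_contDiffOn {p : ℕ} (J : Fin (p + 1) → A →L[ℝ] A) {V : Set (Fin (p + 1) → ℝ)}
    (hV : IsOpen V) {g : (Fin (p + 1) → ℝ) → A} (h : ContDiffOn ℝ ∞ g V) :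
    ContDiffOn ℝ ∞ (DJ J g) V :=
  ContDiffOn.sum fun s _ => (J s).contDiff.comp_contDiffOn (dd_contDiffOn hV h (Pi.single s 1))

theorem DJ_congr {p : ℕ} (J : Fin (p + 1) → A →L[ℝ] A) {V : Set (Fin (p + 1) → ℝ)}
    (hV : IsOpen V) {g g' : (Fin (p + 1) → ℝ) → A} (h : Set.EqOn g g' V) :
    Set.EqOn (DJ J g) (DJ J g') V := fun y hy => by
  simp only [DJ, dd_congr hV h _ hy]

theorem lapP_congr {p : ℕ} {V : Set (Fin (p + 1) → ℝ)}
    (hV : IsOpen V) {g g' : (Fin (p + 1) → ℝ) → A} (h : Set.EqOn g g' V) :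
    Set.EqOn (lapP p g) (lapP p g') V := fun y hy => by
  change ∑ s, dd (Pi.single s 1) (dd (Pi.single s 1) g) y =
    ∑ s, dd (Pi.single s 1) (dd (Pi.single s 1) g') y
  exact Finset.sum_congr rfl fun s _ => dd_congr hV (dd_congr hV h _) _ hy

theorem dd_DJ {p : ℕ} (J : Fin (p + 1) → A →L[ℝ] A) {V : Set (Fin (p + 1) → ℝ)}
    (hV : IsOpen V) {g : (Fin (p + 1) → ℝ) → A} (h : ContDiffOn ℝ ∞ g V) (e : Fin (p + 1) → ℝ) :
    Set.EqOn (dd e (DJ J g)) (DJ J (dd e g)) V := by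
  intro y hy
  unfold DJ
  have hd : ∀ s ∈ Finset.univ, DifferentiableAt ℝ (fun y => J s (dd (Pi.single s 1) g y)) y :=
    fun s _ => (J s).differentiableAt.comp y
      (diffAt_of hV (dd_contDiffOn hV h (Pi.single s 1)) hy)
  rw [dd_sum hd]
  refine Finset.sum_congr rfl fun s _ => ?_
  rw [dd_clm _ (diffAt_of hV (dd_contDiffOn hV h (Pi.single s 1)) hy), dd_comm hV h _ _ hy]

theorem lapP_DJ {p : ℕ} (J : Fin (p + 1) → A →L[ℝ] A) {V : Set (Fin (p + 1) → ℝ)}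
    (hV : IsOpen V) {g : (Fin (p + 1) → ℝ) → A} (h : ContDiffOn ℝ ∞ g V) :
    Set.EqOn (lapP p (DJ J g)) (DJ J (lapP p g)) V := by
  intro y hy
  have e1 : lapP p (DJ J g) y = ∑ t, DJ J (dd (Pi.single t 1) (dd (Pi.single t 1) g)) y := by
    change ∑ s, dd (Pi.single s 1) (dd (Pi.single s 1) (DJ J g)) y = _
    refine Finset.sum_congr rfl fun s _ => ?_
    rw [dd_congr hV (dd_DJ J hV h _) _ hy, dd_DJ J hV (dd_contDiffOn hV h _) _ hy]
  rw [e1]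
  unfold DJ
  rw [Finset.sum_comm]
  refine Finset.sum_congr rfl fun s _ => ?_
  rw [← map_sum]
  congr 1
  exact (dd_sum (fun t _ => diffAt_of hV
    (dd_contDiffOn hV (dd_contDiffOn hV h (Pi.single t 1)) (Pi.single t 1)) hy) _).symm

theorem lapIterP_DJ {p : ℕ} (J : Fin (p + 1) → A →L[ℝ] A) {V : Set (Fin (p + 1) → ℝ)}
    (hV : IsOpen V) {g : (Fin (p + 1) → ℝ) → A} (h : ContDiffOn ℝ ∞ g V) (k : ℕ) :
    Set.EqOn (lapIterP p k (DJ J g)) (DJ J (lapIterP p k g)) V := by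
  induction k with
  | zero => intro y _; rfl
  | succ k ih =>
    rw [lapIterP_succ, lapIterP_succ]
    exact (lapP_congr hV ih).trans (lapP_DJ J hV (lapIterP_contDiffOn hV h k))

theorem DJ_DJ {p : ℕ} (J Jb : Fin (p + 1) → A →L[ℝ] A)
    (hJ : ∀ s t a, Jb s (J t a) + Jb t (J s a) = if s = t then (2 : ℝ) • a else 0)
    {V : Set (Fin (p + 1) → ℝ)}
    (hV : IsOpen V) {g : (Fin (p + 1) → ℝ) → A} (h : ContDiffOn ℝ ∞ g V) :
    Set.EqOn (DJ Jb (DJ J g)) (lapP p g) V := by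
  intro y hy
  have e1 : DJ Jb (DJ J g) y =
      ∑ s, ∑ t, Jb s (J t (dd (Pi.single t 1) (dd (Pi.single s 1) g) y)) := by
    unfold DJ
    refine Finset.sum_congr rfl fun s _ => ?_
    rw [← map_sum]
    congr 1
    exact dd_DJ J hV h _ hy
  have e2 : DJ Jb (DJ J g) y =
      ∑ s, ∑ t, Jb t (J s (dd (Pi.single t 1) (dd (Pi.single s 1) g) y)) := by
    rw [e1, Finset.sum_comm]
    refine Finset.sum_congr rfl fun s _ => Finset.sum_congr rfl fun t _ => ?_
    rw [dd_comm hV h _ _ hy]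
  have e3 : (2 : ℝ) • DJ Jb (DJ J g) y = (2 : ℝ) • lapP p g y := by
    rw [two_smul]
    nth_rewrite 1 [e1]
    rw [e2, ← Finset.sum_add_distrib]
    simp only [← Finset.sum_add_distrib, hJ]
    simp only [Finset.sum_ite_eq, Finset.mem_univ, if_true, ← Finset.smul_sum]
    rfl
  exact smul_right_injective A (two_ne_zero (α := ℝ)) e3

theorem CR_one [CompleteSpace A] {p : ℕ} (J : Fin (p + 1) → A →L[ℝ] A)
    {V : Set (Fin (p + 1) → ℝ)} (hV : IsOpen V)
    {W : Set ((Fin (p + 1) → ℝ) × ℝ)} (hW : IsOpen W) (hWV : W ⊆ Prod.fst ⁻¹' V)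
    {g : (Fin (p + 1) → ℝ) → A} (hg : ContDiffOn ℝ ∞ g V) {c c' : ℕ → ℝ}
    (hN : NC W (useq p c g)) (hN' : NC W (useq p c' (DJ J g)))
    (hc : ∀ k : ℕ, (2 * k + 1) * c' k = c k) :
    ∀ z ∈ W, ∑ s, J s (dd (ey p s) (fun z => ∑' k, useq p c g k z) z) =
      (∑' k, useq p c' (DJ J g) k z) +
        (2 * z.2) • dd (et p) (fun z => ∑' k, useq p c' (DJ J g) k z) z := by
  intro z hz
  have hz' := hWV hz
  have h1 := hasSum_sum (s := (Finset.univ : Finset (Fin (p + 1)))) fun s _ =>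
    (J s).hasSum (hN.hasSum_dd hW hz (ey p s))
  have h2 := (hN'.summable hz).hasSum.add ((hN'.hasSum_dd hW hz (et p)).const_smul (2 * z.2))
  refine h1.unique ?_
  convert h2 using 1
  funext k
  have hk := lapIterP_contDiffOn hV hg k
  have hk' := lapIterP_contDiffOn hV (DJ_contDiffOn J hV hg) k
  rw [useq_eq_mon, useq_eq_mon, mon_dd_et _ _ hV hk' hz']
  simp only [mon_dd_ey _ _ hV hk _ hz', mon, map_smul, ← Finset.smul_sum]
  rw [lapIterP_DJ J hV hg k hz', smul_smul, ← add_smul]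
  change _ • DJ J (lapIterP p k g) z.1 = _
  congr 1
  rw [← hc k]
  rcases k with _ | k
  · simp
  · simp only [Nat.add_sub_cancel, pow_succ]; push_cast; ring

theorem CR_two [CompleteSpace A] {p : ℕ} (J Jb : Fin (p + 1) → A →L[ℝ] A)
    (hJ : ∀ s t a, Jb s (J t a) + Jb t (J s a) = if s = t then (2 : ℝ) • a else 0)
    {V : Set (Fin (p + 1) → ℝ)} (hV : IsOpen V)
    {W : Set ((Fin (p + 1) → ℝ) × ℝ)} (hW : IsOpen W) (hWV : W ⊆ Prod.fst ⁻¹' V)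
    {g : (Fin (p + 1) → ℝ) → A} (hg : ContDiffOn ℝ ∞ g V) {c c' : ℕ → ℝ}
    (hN : NC W (useq p c g)) (hN' : NC W (useq p c' (DJ J g)))
    (hc : ∀ k : ℕ, (-2) * (k + 1) * c (k + 1) = c' k) :
    ∀ z ∈ W, ∑ s, Jb s (dd (ey p s) (fun z => ∑' k, useq p c' (DJ J g) k z) z) =
        (-2 : ℝ) • dd (et p) (fun z => ∑' k, useq p c g k z) z := by
  intro z hz
  have hz' := hWV hz
  have h1 := hasSum_sum (s := (Finset.univ : Finset (Fin (p + 1)))) fun s _ =>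
    (Jb s).hasSum (hN'.hasSum_dd hW hz (ey p s))
  have h2 := (hN.hasSum_dd hW hz (et p)).const_smul (-2 : ℝ)
  have t1 : ∀ k, dd (et p) (useq p c g k) z = mon p (c k * k) (k - 1) (lapIterP p k g) z :=
    fun k => by rw [useq_eq_mon]; exact mon_dd_et _ _ hV (lapIterP_contDiffOn hV hg k) hz'
  have h3 := hasSum_shift h2 (by simp [t1, mon])
  refine h1.unique ?_
  convert h3 using 1
  funext k
  have hk := lapIterP_contDiffOn hV hg k
  have hk' := lapIterP_contDiffOn hV (DJ_contDiffOn J hV hg) k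
  rw [t1, useq_eq_mon]
  simp only [mon_dd_ey _ _ hV hk' _ hz', mon, map_smul, ← Finset.smul_sum]
  have e : ∑ s, Jb s (dd (Pi.single s 1) (lapIterP p k (DJ J g)) z.1) =
      lapIterP p (k + 1) g z.1 := by
    change DJ Jb _ z.1 = _
    rw [DJ_congr Jb hV (lapIterP_DJ J hV hg k) hz', DJ_DJ J Jb hJ hV hk hz', lapIterP_succ]
  rw [e, smul_smul]
  congr 1
  rw [← hc k]
  simp only [Nat.add_sub_cancel]; push_cast; ring

end PDE

section Geo
open scoped ContDiff NNReal ENNReal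
variable {A : Type*} [NormedAddCommGroup A] [NormedSpace ℝ A]

/-- The map `x ↦ (x_p, |x_q|²)`. -/
def sg (m p : ℕ) (x : Fin (m + 1) → ℝ) : (Fin (p + 1) → ℝ) × ℝ :=
  (projP m p x, ∑ s : Fin (m + 1), (xqpart m p x s) ^ 2)

/-- `projP` as a continuous linear map. -/
noncomputable def projL (m p : ℕ) : (Fin (m + 1) → ℝ) →L[ℝ] (Fin (p + 1) → ℝ) :=
  ContinuousLinearMap.pi fun s : Fin (p + 1) =>
    if h : (s : ℕ) < m + 1 then
      ContinuousLinearMap.proj (R := ℝ) (φ := fun _ : Fin (m + 1) => ℝ) (⟨(s : ℕ), h⟩ : Fin (m + 1))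
    else 0

theorem projL_apply (m p : ℕ) (x : Fin (m + 1) → ℝ) : projL m p x = projP m p x := by
  funext s
  simp only [projL, projP, ContinuousLinearMap.coe_pi']
  split <;> simp

/-- the coordinates of `xqpart` as continuous linear maps. -/
noncomputable def xqL (m p : ℕ) (s : Fin (m + 1)) : (Fin (m + 1) → ℝ) →L[ℝ] ℝ :=
  if (s : ℕ) ≤ p then 0 else ContinuousLinearMap.proj (R := ℝ) (φ := fun _ : Fin (m + 1) => ℝ) s

theorem xqL_apply (m p : ℕ) (s : Fin (m + 1)) (x : Fin (m + 1) → ℝ) :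
    xqL m p s x = xqpart m p x s := by
  simp only [xqL, xqpart]
  split <;> simp

theorem sg_contDiff (m p : ℕ) : ContDiff ℝ ∞ (sg m p) := by
  have : sg m p = fun x => (projL m p x, ∑ s : Fin (m + 1), (xqL m p s x) ^ 2) := by
    funext x; simp [sg, projL_apply, xqL_apply]
  rw [this]
  exact (projL m p).contDiff.prodMk (ContDiff.sum fun s _ => (xqL m p s).contDiff.pow 2)

theorem sg_hasFDerivAt (m p : ℕ) (x e : Fin (m + 1) → ℝ) :
    fderiv ℝ (sg m p) x e = (projP m p e, ∑ s, 2 * xqpart m p x s * xqpart m p e s) := by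
  have h0 : sg m p = fun x => (projL m p x, ∑ s : Fin (m + 1), (xqL m p s x) ^ 2) := by
    funext x; simp [sg, projL_apply, xqL_apply]
  have h1 : HasFDerivAt (fun x => ∑ s : Fin (m + 1), (xqL m p s x) ^ 2)
      (∑ s : Fin (m + 1), (2 * xqL m p s x) • xqL m p s) x := by
    refine HasFDerivAt.fun_sum fun s _ => ?_
    have := (hasDerivAt_pow 2 (xqL m p s x)).comp_hasFDerivAt x (xqL m p s).hasFDerivAt
    have e : (((2 : ℕ) : ℝ) * xqL m p s x ^ (2 - 1)) = 2 * xqL m p s x := by norm_num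
    rw [e] at this
    exact this
  have h2 := (projL m p).hasFDerivAt.prodMk h1 (x := x)
  rw [h0, h2.fderiv]
  simp [projL_apply, xqL_apply]

theorem projP_single_le (m p : ℕ) (hp : p < m) (i : Fin (p + 1)) :
    projP m p (Pi.single (Fin.castLE (by omega) i) 1) = Pi.single i 1 := by
  funext t
  have : (t : ℕ) < m + 1 := by omega
  simp only [projP, this, dif_pos, Pi.single_apply, Fin.ext_iff, Fin.val_castLE]

theorem projP_single_gt (m p : ℕ) (s : Fin (m + 1)) (hs : p < s) :
    projP m p (Pi.single s 1) = 0 := by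
  funext t
  simp only [projP, Pi.single_apply, Fin.ext_iff]
  split
  · rw [if_neg (by omega)]; rfl
  · rfl

theorem xqpart_single_le (m p : ℕ) (s t : Fin (m + 1)) (hs : (s : ℕ) ≤ p) :
    xqpart m p (Pi.single s 1) t = 0 := by
  simp only [xqpart, Pi.single_apply, Fin.ext_iff]
  split
  · rfl
  · rw [if_neg (by omega)]

theorem xqpart_single_gt (m p : ℕ) (s t : Fin (m + 1)) (hs : p < s) :
    xqpart m p (Pi.single s 1) t = if t = s then 1 else 0 := by
  simp only [xqpart, Pi.single_apply, Fin.ext_iff]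
  split
  · rw [if_neg (by omega)]
  · rfl

theorem comp_sg_contDiffOn {m p : ℕ} {W : Set ((Fin (p + 1) → ℝ) × ℝ)}
    {Φ : (Fin (p + 1) → ℝ) × ℝ → A} (h : ContDiffOn ℝ ∞ Φ W) :
    ContDiffOn ℝ ∞ (fun x => Φ (sg m p x)) (sg m p ⁻¹' W) :=
  h.comp (sg_contDiff m p).contDiffOn fun _ hx => hx

theorem isOpen_sg {m p : ℕ} {W : Set ((Fin (p + 1) → ℝ) × ℝ)} (hW : IsOpen W) :
    IsOpen (sg m p ⁻¹' W) := hW.preimage (sg_contDiff m p).continuous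

theorem dd_comp_sg {m p : ℕ} {W : Set ((Fin (p + 1) → ℝ) × ℝ)} (hW : IsOpen W)
    {Φ : (Fin (p + 1) → ℝ) × ℝ → A} (h : ContDiffOn ℝ ∞ Φ W) {x : Fin (m + 1) → ℝ}
    (hx : sg m p x ∈ W) (e : Fin (m + 1) → ℝ) :
    dd e (fun x => Φ (sg m p x)) x =
      fderiv ℝ Φ (sg m p x) (projP m p e, ∑ s, 2 * xqpart m p x s * xqpart m p e s) := by
  have h1 := (diffAt_of hW h hx).hasFDerivAt.comp x
    ((sg_contDiff m p).differentiable (by simp) x).hasFDerivAt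
  have h2 : HasFDerivAt (fun x => Φ (sg m p x)) _ x := h1
  simp only [dd]
  rw [h2.fderiv, ContinuousLinearMap.comp_apply, sg_hasFDerivAt]

theorem dd_comp_sg_le {m p : ℕ} (hp : p < m) {W : Set ((Fin (p + 1) → ℝ) × ℝ)} (hW : IsOpen W)
    {Φ : (Fin (p + 1) → ℝ) × ℝ → A} (h : ContDiffOn ℝ ∞ Φ W) (i : Fin (p + 1)) :
    Set.EqOn (dd (Pi.single (Fin.castLE (by omega) i) 1) (fun x => Φ (sg m p x)))
      (fun x => dd (ey p i) Φ (sg m p x)) (sg m p ⁻¹' W) := by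
  intro x hx
  rw [dd_comp_sg hW h hx, projP_single_le m p hp]
  have : ∀ t, xqpart m p (Pi.single (Fin.castLE (by omega : p + 1 ≤ m + 1) i) 1) t = 0 := fun t =>
    xqpart_single_le m p _ t (by simp; omega)
  simp only [this, mul_zero, Finset.sum_const_zero]
  rfl

theorem dd_comp_sg_gt {m p : ℕ} {W : Set ((Fin (p + 1) → ℝ) × ℝ)} (hW : IsOpen W)
    {Φ : (Fin (p + 1) → ℝ) × ℝ → A} (h : ContDiffOn ℝ ∞ Φ W) (s : Fin (m + 1)) (hs : p < s) :
    Set.EqOn (dd (Pi.single s 1) (fun x => Φ (sg m p x)))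
      (fun x => (2 * x s) • dd (et p) Φ (sg m p x)) (sg m p ⁻¹' W) := by
  intro x hx
  rw [dd_comp_sg hW h hx, projP_single_gt m p s hs]
  simp only [xqpart_single_gt m p s _ hs, mul_ite, mul_one, mul_zero, Finset.sum_ite_eq',
    Finset.mem_univ, if_true]
  have e : xqpart m p x s = x s := by simp [xqpart, hs]
  rw [e]
  have : ((0 : Fin (p + 1) → ℝ), 2 * x s) = (2 * x s) • et p := by simp [et]
  rw [this, map_smul]; rfl

theorem sum_split {m p : ℕ} (hp : p < m) (f : Fin (m + 1) → A) :
    ∑ s, f s = ∑ i : Fin (p + 1), f (Fin.castLE (by omega) i) +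
      ∑ s : Fin (m + 1), if (s : ℕ) ≤ p then 0 else f s := by
  have h1 : ∀ s : Fin (m + 1), f s = (if (s : ℕ) ≤ p then f s else 0) +
      if (s : ℕ) ≤ p then 0 else f s := fun s => by split <;> simp
  rw [Finset.sum_congr rfl fun s _ => h1 s, Finset.sum_add_distrib]
  congr 1
  rw [← Finset.sum_filter]
  symm
  refine Finset.sum_nbij (fun i => Fin.castLE (by omega) i) ?_ ?_ ?_ ?_
  · intro i _; simp; omega
  · intro i _ j _ h; simpa [Fin.ext_iff] using h
  · intro s hs
    simp at hs
    exact ⟨⟨s, by omega⟩, by simp, by simp⟩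
  · intro i _; rfl

theorem card_gt {m p : ℕ} (hp : p < m) (a : A) :
    ∑ s : Fin (m + 1), (if (s : ℕ) ≤ p then 0 else a) = ((m - p : ℕ) : ℝ) • a := by
  have h := sum_split hp (fun _ : Fin (m + 1) => a)
  simp only [Finset.sum_const, Finset.card_univ, Fintype.card_fin] at h
  have h2 : (m + 1) • a = (p + 1) • a + (m - p) • a := by
    rw [← add_smul]; congr 1; omega
  rw [h2] at h
  rw [← add_left_cancel h, Nat.cast_smul_eq_nsmul]

theorem dd_coord {m : ℕ} (s t : Fin (m + 1)) (x : Fin (m + 1) → ℝ) :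
    dd (Pi.single t 1) (fun x : Fin (m + 1) → ℝ => x s) x = if s = t then 1 else 0 := by
  have : HasFDerivAt (fun x : Fin (m + 1) → ℝ => x s)
    (ContinuousLinearMap.proj (R := ℝ) (φ := fun _ : Fin (m + 1) => ℝ) s) x := hasFDerivAt_apply s x
  simp [dd, this.fderiv, Pi.single_apply]

theorem coord_smul_contDiffOn {m : ℕ} {V : Set (Fin (m + 1) → ℝ)} {B : (Fin (m + 1) → ℝ) → A}
    (h : ContDiffOn ℝ ∞ B V) (s : Fin (m + 1)) :
    ContDiffOn ℝ ∞ (fun x => x s • B x) V :=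
  (contDiff_apply ℝ ℝ s).contDiffOn.smul h

theorem lapF_congr {m : ℕ} {V : Set (Fin (m + 1) → ℝ)}
    (hV : IsOpen V) {g g' : (Fin (m + 1) → ℝ) → A} (h : Set.EqOn g g' V) :
    Set.EqOn (lapF m g) (lapF m g') V := fun y hy =>
  Finset.sum_congr rfl fun _ _ => dd_congr hV (dd_congr hV h _) _ hy

theorem lapF_add {m : ℕ} {V : Set (Fin (m + 1) → ℝ)}
    (hV : IsOpen V) {g g' : (Fin (m + 1) → ℝ) → A} (h : ContDiffOn ℝ ∞ g V)
    (h' : ContDiffOn ℝ ∞ g' V) :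
    Set.EqOn (lapF m (fun x => g x + g' x)) (fun x => lapF m g x + lapF m g' x) V := by
  intro x hx
  change ∑ s, dd (Pi.single s 1) (dd (Pi.single s 1) _) x =
    ∑ s, dd (Pi.single s 1) (dd (Pi.single s 1) _) x +
      ∑ s, dd (Pi.single s 1) (dd (Pi.single s 1) _) x
  rw [← Finset.sum_add_distrib]
  refine Finset.sum_congr rfl fun s _ => ?_
  rw [dd_congr hV (fun y hy => dd_add (diffAt_of hV h hy) (diffAt_of hV h' hy) _) _ hx]
  exact dd_add (diffAt_of hV (dd_contDiffOn hV h _) hx) (diffAt_of hV (dd_contDiffOn hV h' _) hx) _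

theorem lapF_const_smul {m : ℕ} {V : Set (Fin (m + 1) → ℝ)}
    (hV : IsOpen V) (c : ℝ) {g : (Fin (m + 1) → ℝ) → A} (h : ContDiffOn ℝ ∞ g V) :
    Set.EqOn (lapF m (fun x => c • g x)) (fun x => c • lapF m g x) V := by
  intro x hx
  change ∑ s, dd (Pi.single s 1) (dd (Pi.single s 1) _) x =
    c • ∑ s, dd (Pi.single s 1) (dd (Pi.single s 1) _) x
  rw [Finset.smul_sum]
  refine Finset.sum_congr rfl fun s _ => ?_
  rw [dd_congr hV (fun y hy => dd_const_smul c (diffAt_of hV h hy) _) _ hx]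
  exact dd_const_smul c (diffAt_of hV (dd_contDiffOn hV h _) hx) _

theorem lapF_sum {m : ℕ} {ι : Type*} {V : Set (Fin (m + 1) → ℝ)} {u : Finset ι}
    (hV : IsOpen V) {g : ι → (Fin (m + 1) → ℝ) → A} (h : ∀ i, ContDiffOn ℝ ∞ (g i) V) :
    Set.EqOn (lapF m (fun x => ∑ i ∈ u, g i x)) (fun x => ∑ i ∈ u, lapF m (g i) x) V := by
  intro x hx
  change ∑ s, dd (Pi.single s 1) (dd (Pi.single s 1) _) x =
    ∑ i ∈ u, ∑ s, dd (Pi.single s 1) (dd (Pi.single s 1) (g i)) x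
  rw [Finset.sum_comm]
  refine Finset.sum_congr rfl fun s _ => ?_
  rw [dd_congr hV (fun y hy => dd_sum (fun i _ => diffAt_of hV (h i) hy) _) _ hx]
  exact dd_sum (fun i _ => diffAt_of hV (dd_contDiffOn hV (h i) _) hx) _

theorem lapF_comp_sg {m p : ℕ} (hp : p < m) {W : Set ((Fin (p + 1) → ℝ) × ℝ)} (hW : IsOpen W)
    {Φ : (Fin (p + 1) → ℝ) × ℝ → A} (h : ContDiffOn ℝ ∞ Φ W) :
    Set.EqOn (lapF m (fun x => Φ (sg m p x)))
      (fun x => EE p (2 * ((m - p : ℕ) : ℝ)) Φ (sg m p x)) (sg m p ⁻¹' W) := by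
  intro x hx
  have hO := isOpen_sg (m := m) hW
  change ∑ s, dd (Pi.single s 1) (dd (Pi.single s 1) _) x = _
  rw [sum_split hp]
  have e1 : ∀ i : Fin (p + 1), dd (Pi.single (Fin.castLE (by omega : p + 1 ≤ m + 1) i) (1 : ℝ))
      (dd (Pi.single (Fin.castLE (by omega : p + 1 ≤ m + 1) i) (1 : ℝ)) (fun x => Φ (sg m p x))) x =
      dd (ey p i) (dd (ey p i) Φ) (sg m p x) := fun i => by
    rw [dd_congr hO (dd_comp_sg_le hp hW h i) _ hx]
    exact dd_comp_sg_le hp hW (dd_contDiffOn hW h _) i hx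
  have e2 : ∀ s : Fin (m + 1), (if (s : ℕ) ≤ p then 0 else
      dd (Pi.single s (1 : ℝ)) (dd (Pi.single s (1 : ℝ)) (fun x => Φ (sg m p x))) x) =
      (4 * xqpart m p x s ^ 2) • dd (et p) (dd (et p) Φ) (sg m p x) +
      if (s : ℕ) ≤ p then 0 else (2 : ℝ) • dd (et p) Φ (sg m p x) := fun s => by
    split
    · rename_i hs; simp [xqpart, hs]
    · rename_i hs
      have hs' : p < s := by omega
      have e : xqpart m p x s = x s := by simp [xqpart, hs]
      have hd := dd_contDiffOn hW h (et p)
      rw [dd_congr hO (dd_comp_sg_gt hW h s hs') _ hx]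
      have hc : DifferentiableAt ℝ (fun x : Fin (m + 1) → ℝ => 2 * x s) x := by fun_prop
      have hc' : dd (Pi.single s 1) (fun x : Fin (m + 1) → ℝ => 2 * x s) x = 2 := by
        have := dd_const_smul (2 : ℝ) (f := fun x : Fin (m + 1) → ℝ => x s) (x := x)
          (by fun_prop) (Pi.single s 1)
        simp only [smul_eq_mul] at this
        rw [this, dd_coord]; simp
      rw [dd_smul hc (diffAt_of hO (comp_sg_contDiffOn hd) hx), dd_comp_sg_gt hW hd s hs' hx, hc', e,
        smul_smul]
      congr 2
      ring
  simp only [e1, e2, Finset.sum_add_distrib]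
  rw [card_gt hp, ← Finset.sum_smul, ← Finset.mul_sum, smul_smul]
  simp only [EE]
  rw [mul_comm ((m - p : ℕ) : ℝ) 2]
  change _ + ((4 * (sg m p x).2) • _ + _) = _
  abel

theorem lapF_coord_comp_sg {m p : ℕ} (hp : p < m) {W : Set ((Fin (p + 1) → ℝ) × ℝ)} (hW : IsOpen W)
    {Ψ : (Fin (p + 1) → ℝ) × ℝ → A} (h : ContDiffOn ℝ ∞ Ψ W) (j : Fin (m + 1)) (hj : p < j) :
    Set.EqOn (lapF m (fun x => x j • Ψ (sg m p x)))
      (fun x => x j • EE p (2 * ((m - p : ℕ) : ℝ) + 4) Ψ (sg m p x)) (sg m p ⁻¹' W) := by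
  intro x hx
  have hO := isOpen_sg (m := m) hW
  have hB := comp_sg_contDiffOn (m := m) h
  set B := fun x => Ψ (sg m p x) with hBdef
  have hc : ∀ y, DifferentiableAt ℝ (fun x : Fin (m + 1) → ℝ => x j) y := fun y => by fun_prop
  have e1 : ∀ s : Fin (m + 1), dd (Pi.single s (1 : ℝ)) (dd (Pi.single s (1 : ℝ))
      (fun x => x j • B x)) x = x j • dd (Pi.single s (1 : ℝ)) (dd (Pi.single s (1 : ℝ)) B) x +
        if j = s then (2 : ℝ) • dd (Pi.single s (1 : ℝ)) B x else 0 := fun s => by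
    have h1 : Set.EqOn (dd (Pi.single s (1 : ℝ)) (fun x => x j • B x))
      (fun x => x j • dd (Pi.single s (1 : ℝ)) B x + (if j = s then (1 : ℝ) else 0) • B x)
      (sg m p ⁻¹' W) := fun y hy => by
        rw [dd_smul (hc y) (diffAt_of hO hB hy), dd_coord]
    have hdB := dd_contDiffOn hO hB (Pi.single s (1 : ℝ))
    have d1 := diffAt_of hO hdB hx
    have d0 := diffAt_of hO hB hx
    rw [dd_congr hO h1 _ hx, dd_add ((hc x).fun_smul d1) (d0.fun_const_smul _),
      dd_smul (hc x) d1, dd_const_smul _ d0, dd_coord]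
    split
    · rw [one_smul, add_assoc, ← two_smul ℝ]
    · simp
  change ∑ s, dd (Pi.single s (1 : ℝ)) (dd (Pi.single s (1 : ℝ)) (fun x => x j • B x)) x = _
  simp only [e1, Finset.sum_add_distrib, Finset.sum_ite_eq, Finset.mem_univ, if_true,
    ← Finset.smul_sum]
  have e2 := lapF_comp_sg hp hW h hx
  change ∑ s, dd (Pi.single s 1) (dd (Pi.single s 1) B) x = _ at e2
  rw [e2, dd_comp_sg_gt hW h j hj hx, smul_smul]
  simp only [EE]
  rw [add_smul, show (2 : ℝ) * (2 * x j) = x j * 4 by ring, mul_smul (x j) 4, ← smul_add]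
  congr 1
  abel

/-- The axial function built from two stem functions. -/
noncomputable def UU (m p : ℕ) (L : Fin (m + 1) → A →L[ℝ] A) (Φ Ψ : (Fin (p + 1) → ℝ) × ℝ → A)
    (x : Fin (m + 1) → ℝ) : A :=
  Φ (sg m p x) + ∑ s, xqpart m p x s • L s (Ψ (sg m p x))

theorem EE_clm {p : ℕ} {W : Set ((Fin (p + 1) → ℝ) × ℝ)} (hW : IsOpen W) (L : A →L[ℝ] A) (α : ℝ)
    {Ψ : (Fin (p + 1) → ℝ) × ℝ → A} (h : ContDiffOn ℝ ∞ Ψ W) :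
    ∀ z ∈ W, EE p α (fun z => L (Ψ z)) z = L (EE p α Ψ z) := by
  intro z hz
  have h1 : ∀ e, Set.EqOn (dd e (fun z => L (Ψ z))) (fun z => L (dd e Ψ z)) W := fun e y hy =>
    dd_clm L (diffAt_of hW h hy) e
  have h2 : ∀ e, dd e (dd e (fun z => L (Ψ z))) z = L (dd e (dd e Ψ) z) := fun e => by
    rw [dd_congr hW (h1 e) _ hz]
    exact dd_clm L (diffAt_of hW (dd_contDiffOn hW h e) hz) e
  simp only [EE, h2, h1 _ hz, map_add, map_smul, map_sum]

theorem UU_contDiffOn {m p : ℕ} (L : Fin (m + 1) → A →L[ℝ] A) {W : Set ((Fin (p + 1) → ℝ) × ℝ)}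
    {Φ Ψ : (Fin (p + 1) → ℝ) × ℝ → A} (h : ContDiffOn ℝ ∞ Φ W) (h' : ContDiffOn ℝ ∞ Ψ W) :
    ContDiffOn ℝ ∞ (UU m p L Φ Ψ) (sg m p ⁻¹' W) := by
  refine (comp_sg_contDiffOn h).add (ContDiffOn.sum fun s _ => ?_)
  have : (fun x => xqpart m p x s) = xqL m p s := by funext x; rw [xqL_apply]
  refine ContDiffOn.smul ?_ ((L s).contDiff.comp_contDiffOn (comp_sg_contDiffOn h'))
  rw [this]
  exact (xqL m p s).contDiff.contDiffOn

theorem lapF_UU {m p : ℕ} (hp : p < m) (L : Fin (m + 1) → A →L[ℝ] A)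
    {W : Set ((Fin (p + 1) → ℝ) × ℝ)} (hW : IsOpen W)
    {Φ Ψ : (Fin (p + 1) → ℝ) × ℝ → A} (h : ContDiffOn ℝ ∞ Φ W) (h' : ContDiffOn ℝ ∞ Ψ W) {α : ℝ}
    (hE : ∀ z ∈ W, EE p α Φ z = 0) (hE' : ∀ z ∈ W, EE p (α + 4) Ψ z = 0) :
    Set.EqOn (lapF m (UU m p L Φ Ψ))
      (fun x => (2 * ((m - p : ℕ) : ℝ) - α) • UU m p L (dd (et p) Φ) (dd (et p) Ψ) x)
      (sg m p ⁻¹' W) := by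
  intro x hx
  have hO := isOpen_sg (m := m) hW
  have key : ∀ (β γ : ℝ) (Θ : (Fin (p + 1) → ℝ) × ℝ → A), (∀ z ∈ W, EE p γ Θ z = 0) →
      EE p β Θ (sg m p x) = (β - γ) • dd (et p) Θ (sg m p x) := fun β γ Θ hΘ => by
    have := hΘ _ hx
    have e : EE p β Θ (sg m p x) = EE p γ Θ (sg m p x) + (β - γ) • dd (et p) Θ (sg m p x) := by
      simp only [EE, sub_smul]; abel
    rw [e, this, zero_add]
  have hs : ∀ s : Fin (m + 1), ContDiffOn ℝ ∞ (fun x => xqpart m p x s • L s (Ψ (sg m p x)))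
      (sg m p ⁻¹' W) := fun s => by
    have : (fun x => xqpart m p x s) = xqL m p s := by funext x; rw [xqL_apply]
    refine ContDiffOn.smul ?_ ((L s).contDiff.comp_contDiffOn (comp_sg_contDiffOn h'))
    rw [this]
    exact (xqL m p s).contDiff.contDiffOn
  unfold UU
  rw [lapF_add hO (comp_sg_contDiffOn h) (ContDiffOn.sum fun s _ => hs s) hx]
  simp only
  rw [lapF_comp_sg hp hW h hx, lapF_sum hO hs hx]
  simp only
  rw [key _ _ _ hE, smul_add, Finset.smul_sum]
  congr 1
  refine Finset.sum_congr rfl fun s _ => ?_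
  rcases le_or_gt (s : ℕ) p with hsp | hsp
  · have : ∀ x, xqpart m p x s = 0 := fun x => by simp [xqpart, hsp]
    have z : ∀ t : Fin (m + 1), pdF m t (fun _ => (0 : A)) = fun _ => 0 := fun t => by
      funext y; simp [pdF]
    simp [this, lapF, z]
  · have e : ∀ x, xqpart m p x s = x s := fun x => by simp [xqpart, hsp]
    have hL : ContDiffOn ℝ ∞ (fun z => L s (Ψ z)) W := (L s).contDiff.comp_contDiffOn h'
    simp only [e]
    rw [lapF_coord_comp_sg hp hW hL s hsp hx]
    simp only
    rw [EE_clm hW (L s) _ h' _ hx, key _ _ _ hE', map_smul, smul_comm]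
    rw [show 2 * ((m - p : ℕ) : ℝ) + 4 - (α + 4) = 2 * ((m - p : ℕ) : ℝ) - α by ring]

theorem iter_dt_contDiffOn {p : ℕ} {W : Set ((Fin (p + 1) → ℝ) × ℝ)} (hW : IsOpen W)
    {Φ : (Fin (p + 1) → ℝ) × ℝ → A} (h : ContDiffOn ℝ ∞ Φ W) (k : ℕ) :
    ContDiffOn ℝ ∞ ((dd (et p))^[k] Φ) W := by
  induction k with
  | zero => exact h
  | succ k ih => rw [Function.iterate_succ_apply']; exact dd_contDiffOn hW ih _

theorem iter_dt_EE {p : ℕ} {W : Set ((Fin (p + 1) → ℝ) × ℝ)} (hW : IsOpen W)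
    {Φ : (Fin (p + 1) → ℝ) × ℝ → A} (h : ContDiffOn ℝ ∞ Φ W) {α : ℝ}
    (hE : ∀ z ∈ W, EE p α Φ z = 0) (k : ℕ) :
    ∀ z ∈ W, EE p (α + 4 * k) ((dd (et p))^[k] Φ) z = 0 := by
  induction k with
  | zero => simpa using hE
  | succ k ih =>
    rw [Function.iterate_succ_apply']
    have := EE_dt hW (iter_dt_contDiffOn hW h k) ih
    rw [show α + 4 * ((k + 1 : ℕ) : ℝ) = α + 4 * k + 4 by push_cast; ring]
    exact this

theorem lapIterF_UU {m p : ℕ} (hp : p < m) (L : Fin (m + 1) → A →L[ℝ] A)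
    {W : Set ((Fin (p + 1) → ℝ) × ℝ)} (hW : IsOpen W)
    {Φ Ψ : (Fin (p + 1) → ℝ) × ℝ → A} (h : ContDiffOn ℝ ∞ Φ W) (h' : ContDiffOn ℝ ∞ Ψ W)
    (hE : ∀ z ∈ W, EE p 2 Φ z = 0) (hE' : ∀ z ∈ W, EE p 6 Ψ z = 0)
    {f : (Fin (m + 1) → ℝ) → A} (hf : Set.EqOn f (UU m p L Φ Ψ) (sg m p ⁻¹' W)) (k : ℕ) :
    ∃ K : ℝ, Set.EqOn (lapIterF m k f)
      (fun x => K • UU m p L ((dd (et p))^[k] Φ) ((dd (et p))^[k] Ψ) x) (sg m p ⁻¹' W) := by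
  have hO := isOpen_sg (m := m) hW
  induction k with
  | zero => exact ⟨1, fun x hx => by simpa [lapIterF] using hf hx⟩
  | succ k ih =>
    obtain ⟨K, hK⟩ := ih
    have h1 := iter_dt_contDiffOn hW h k
    have h1' := iter_dt_contDiffOn hW h' k
    refine ⟨K * (2 * ((m - p : ℕ) : ℝ) - (2 + 4 * k)), fun x hx => ?_⟩
    have e : lapIterF m (k + 1) f = lapF m (lapIterF m k f) := by
      simp only [lapIterF, Function.iterate_succ_apply']
    rw [e, lapF_congr hO hK hx, lapF_const_smul hO K (UU_contDiffOn L h1 h1') hx]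
    simp only
    rw [lapF_UU hp L hW h1 h1' (iter_dt_EE hW h hE k)
      (by have := iter_dt_EE hW h' hE' k
          rwa [show (2 + 4 * (k : ℝ) + 4) = 6 + 4 * k by ring]) hx, mul_smul]
    simp only [Function.iterate_succ_apply']

theorem lapF_zero_UU {m p : ℕ} (hp : p < m) (L : Fin (m + 1) → A →L[ℝ] A)
    {W : Set ((Fin (p + 1) → ℝ) × ℝ)} (hW : IsOpen W) {n : ℕ} (hn : m - p = 2 * n + 1)
    {Φ Ψ : (Fin (p + 1) → ℝ) × ℝ → A} (h : ContDiffOn ℝ ∞ Φ W) (h' : ContDiffOn ℝ ∞ Ψ W)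
    (hE : ∀ z ∈ W, EE p (2 + 4 * n) Φ z = 0) (hE' : ∀ z ∈ W, EE p (6 + 4 * n) Ψ z = 0) (K : ℝ)
    {f : (Fin (m + 1) → ℝ) → A}
    (hf : Set.EqOn f (fun x => K • UU m p L Φ Ψ x) (sg m p ⁻¹' W)) :
    Harmonic m f (sg m p ⁻¹' W) := by
  have hO := isOpen_sg (m := m) hW
  have hU := UU_contDiffOn (m := m) L h h'
  refine ⟨?_, fun x hx => ?_⟩
  · refine ContDiffOn.congr ?_ hf
    exact (hU.of_le (WithTop.coe_le_coe.2 (le_top (a := (2 : ℕ∞))))).const_smul K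
  · rw [lapF_congr hO hf hx, lapF_const_smul hO K hU hx]
    simp only
    rw [lapF_UU hp L hW h h' hE
      (by rwa [show (2 + 4 * (n : ℝ) + 4) = 6 + 4 * n by ring]) hx, hn]
    simp only
    rw [show (2 * ((2 * n + 1 : ℕ) : ℝ) - (2 + 4 * n)) = 0 by push_cast; ring]
    simp

end Geo

section Alg
open scoped ContDiff NNReal ENNReal
variable {A : Type*} [NormedAddCommGroup A] [NormedSpace ℝ A] [Mul A] [One A] {conj : A → A}

/-- left multiplication -/
noncomputable def lmul (H : IsAltStarAlg A conj) (a : A) : A →L[ℝ] A :=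
  haveI := H.finDim
  LinearMap.toContinuousLinearMap
    { toFun := fun b => a * b
      map_add' := H.mul_add' a
      map_smul' := fun r b => H.mul_smul' r a b }

theorem lmul_apply (H : IsAltStarAlg A conj) (a b : A) : lmul H a b = a * b := rfl

theorem a_mul_neg (H : IsAltStarAlg A conj) (a b : A) : a * (-b) = -(a * b) := by
  simpa using H.mul_smul' (-1) a b

theorem a_neg_mul (H : IsAltStarAlg A conj) (a b : A) : (-a) * b = -(a * b) := by
  simpa using H.smul_mul' (-1) a b

theorem a_mul_zero (H : IsAltStarAlg A conj) (a : A) : a * 0 = 0 := by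
  simpa using H.mul_smul' 0 a 0

theorem a_zero_mul (H : IsAltStarAlg A conj) (a : A) : 0 * a = 0 := by
  simpa using H.smul_mul' 0 0 a

theorem a_sum_mul (H : IsAltStarAlg A conj) {ι : Type*} (u : Finset ι) (f : ι → A) (a : A) :
    (∑ i ∈ u, f i) * a = ∑ i ∈ u, f i * a := by
  classical
  induction u using Finset.induction_on with
  | empty => simp [a_zero_mul H]
  | insert i u hi ih => rw [Finset.sum_insert hi, Finset.sum_insert hi, H.add_mul', ih]

theorem a_mul_sum (H : IsAltStarAlg A conj) {ι : Type*} (u : Finset ι) (f : ι → A) (a : A) :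
    a * (∑ i ∈ u, f i) = ∑ i ∈ u, a * f i :=
  map_sum (lmul H a) f u

theorem lin_alt (H : IsAltStarAlg A conj) (a b x : A) :
    a * (b * x) + b * (a * x) = (a * b + b * a) * x := by
  have h := H.alt_left (a + b) x
  simp only [H.add_mul', H.mul_add'] at h ⊢
  have h1 := H.alt_left a x
  have h2 := H.alt_left b x
  rw [h1, h2] at h
  have : a * a * x + (a * (b * x) + b * (a * x)) + b * b * x =
    a * a * x + (a * b * x + b * a * x) + b * b * x := by
    calc _ = a * a * x + a * (b * x) + (b * (a * x) + b * b * x) := by abel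
      _ = _ := by rw [← h1] at h ⊢; first | (rw [← h1]; exact (by rw [← h1] at h; convert h using 1 <;> abel)) | (convert h using 1 <;> abel)
  exact add_left_cancel (add_right_cancel this)

theorem vv (H : IsAltStarAlg A conj) {v : ℕ → A} {m : ℕ} (hv : IsHypBasis A conj v m) {s t : ℕ}
    (hs : 1 ≤ s) (hs' : s ≤ m) (ht : 1 ≤ t) (ht' : t ≤ m) :
    v s * v t + v t * v s = if s = t then (-2 : ℝ) • (1 : A) else 0 := by
  split
  · rename_i h
    subst h
    have h1 := hv.trace_zero s hs hs'
    have h2 := hv.norm_one s hs hs'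
    rw [eq_neg_of_add_eq_zero_right h1, a_mul_neg H] at h2
    rw [neg_eq_iff_eq_neg.1 h2, neg_smul, two_smul]
    abel
  · rename_i h
    rw [hv.anticomm s t hs hs' ht ht' h]; simp

theorem one_ne (H : IsAltStarAlg A conj) : (1 : A) ≠ 0 := by
  intro h
  have h1 : ∀ a : A, a = 0 := fun a => by rw [← H.one_mul' a, h, a_zero_mul H]
  have : Subsingleton A := ⟨fun a b => by rw [h1 a, h1 b]⟩
  have h2 := H.one_lt_finrank
  rw [Module.finrank_zero_of_subsingleton] at h2
  omega

theorem emb_mul (H : IsAltStarAlg A conj) (v : ℕ → A) (m : ℕ) (w : Fin (m + 1) → ℝ) (a : A) :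
    emb v m w * a = ∑ s : Fin (m + 1), w s • (v s * a) := by
  rw [emb, a_sum_mul H]
  simp only [H.smul_mul']

theorem mul_emb (H : IsAltStarAlg A conj) (v : ℕ → A) (m : ℕ) (w : Fin (m + 1) → ℝ) (a : A) :
    a * emb v m w = ∑ s : Fin (m + 1), w s • (a * v s) := by
  rw [emb, a_mul_sum H]
  simp only [H.mul_smul']

theorem emb_smul (v : ℕ → A) (m : ℕ) (r : ℝ) (w : Fin (m + 1) → ℝ) :
    emb v m (r • w) = r • emb v m w := by
  simp only [emb, Finset.smul_sum, Pi.smul_apply, smul_eq_mul, mul_smul]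

theorem emb_sq (H : IsAltStarAlg A conj) {v : ℕ → A} {m p : ℕ} (hv : IsHypBasis A conj v m)
    {w : Fin (m + 1) → ℝ} (hw : ∀ s : Fin (m + 1), (s : ℕ) ≤ p → w s = 0) :
    emb v m w * emb v m w = -((∑ s, w s ^ 2) • (1 : A)) := by
  have e1 : emb v m w * emb v m w = ∑ s, ∑ t, (w s * w t) • (v s * v t) := by
    rw [emb_mul H]
    simp only [mul_emb H, Finset.smul_sum, smul_smul]
  have e2 : emb v m w * emb v m w = ∑ s, ∑ t, (w s * w t) • (v t * v s) := by
    rw [e1, Finset.sum_comm]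
    simp only [mul_comm]
  have e3 : (2 : ℝ) • (emb v m w * emb v m w) = (2 : ℝ) • (-((∑ s, w s ^ 2) • (1 : A))) := by
    rw [two_smul]
    nth_rewrite 1 [e1]
    rw [e2, ← Finset.sum_add_distrib]
    simp only [← Finset.sum_add_distrib, ← smul_add]
    have : ∀ s t : Fin (m + 1), (w s * w t) • (v s * v t + v t * v s) =
        if s = t then (w s ^ 2) • ((-2 : ℝ) • (1 : A)) else 0 := by
      intro s t
      rcases Nat.eq_zero_or_pos (s : ℕ) with h | h
      · have := hw s (by omega)
        simp [this]
      rcases Nat.eq_zero_or_pos (t : ℕ) with h' | h'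
      · have := hw t (by omega)
        by_cases hst : s = t
        · subst hst; simp [this]
        · simp [this, hst]
      rw [vv H hv h (by omega) h' (by omega)]
      by_cases hst : s = t
      · subst hst; simp [sq]
      · have : (s : ℕ) ≠ t := fun h => hst (Fin.ext h)
        simp [hst, this]
    simp only [this, Finset.sum_ite_eq, Finset.mem_univ, if_true, ← Finset.sum_smul]
    rw [smul_smul, smul_neg, smul_smul, ← neg_smul]
    congr 1; ring
  exact smul_right_injective A (two_ne_zero (α := ℝ)) e3

theorem sph_norm (H : IsAltStarAlg A conj) {v : ℕ → A} {m p : ℕ} (hv : IsHypBasis A conj v m)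
    {w : Fin (m + 1) → ℝ} (hw : w ∈ Sph v m p) : ∑ s, w s ^ 2 = 1 := by
  have h := hw.2
  rw [emb_sq H hv hw.1, neg_inj] at h
  have h2 : (∑ s, w s ^ 2 - 1) • (1 : A) = 0 := by rw [sub_smul, h]; simp
  rcases smul_eq_zero.1 h2 with h3 | h3
  · linarith
  · exact absurd h3 (one_ne H)

theorem om_om (H : IsAltStarAlg A conj) {v : ℕ → A} {m p : ℕ}
    {w : Fin (m + 1) → ℝ} (hw : w ∈ Sph v m p) (a : A) :
    emb v m w * (emb v m w * a) = -a := by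
  rw [H.alt_left, hw.2, a_neg_mul H, H.one_mul']

theorem v_om (H : IsAltStarAlg A conj) {v : ℕ → A} {m p : ℕ} (hv : IsHypBasis A conj v m)
    (hp : p < m) {w : Fin (m + 1) → ℝ} (hw : w ∈ Sph v m p) {s : ℕ} (hs : 1 ≤ s) (hs' : s ≤ p)
    (a : A) : v s * (emb v m w * a) = emb v m w * (-(v s * a)) := by
  have h : v s * emb v m w + emb v m w * v s = 0 := by
    rw [emb_mul H, mul_emb H, ← Finset.sum_add_distrib]
    refine Finset.sum_eq_zero fun t _ => ?_
    rw [← smul_add]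
    rcases le_or_gt (t : ℕ) p with h | h
    · rw [hw.1 t h, zero_smul]
    · rw [vv H hv hs (by omega) (by omega) (by omega), if_neg (by omega), smul_zero]
  have h2 := lin_alt H (v s) (emb v m w) a
  rw [h, a_zero_mul H] at h2
  rw [a_mul_neg H]
  exact eq_neg_of_add_eq_zero_left h2

/-- Left multiplications by the basis vectors. -/
noncomputable def JJ (H : IsAltStarAlg A conj) (v : ℕ → A) (p : ℕ) (s : Fin (p + 1)) : A →L[ℝ] A :=
  lmul H (v s)

/-- Left multiplications by the conjugate basis vectors. -/
noncomputable def JB (H : IsAltStarAlg A conj) (v : ℕ → A) (p : ℕ) (s : Fin (p + 1)) : A →L[ℝ] A :=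
  if (s : ℕ) = 0 then ContinuousLinearMap.id ℝ A else - lmul H (v s)

theorem JB_JJ (H : IsAltStarAlg A conj) {v : ℕ → A} {m p : ℕ} (hv : IsHypBasis A conj v m)
    (hp : p < m) (s t : Fin (p + 1)) (a : A) :
    JB H v p s (JJ H v p t a) + JB H v p t (JJ H v p s a) = if s = t then (2 : ℝ) • a else 0 := by
  have h1 : ∀ b, v 0 * b = b := fun b => by rw [hv.v_zero, H.one_mul']
  by_cases hs : (s : ℕ) = 0 <;> by_cases ht : (t : ℕ) = 0
  · have : s = t := Fin.ext (by omega)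
    subst this
    simp [JB, JJ, hs, lmul_apply, h1, two_smul]
  · have : s ≠ t := fun h => ht (by rw [← h, hs])
    simp [JB, JJ, hs, ht, lmul_apply, h1, this]
  · have : s ≠ t := fun h => hs (by rw [h, ht])
    simp [JB, JJ, hs, ht, lmul_apply, h1, this]
  · simp only [JB, JJ, hs, ht, if_false, ContinuousLinearMap.neg_apply, lmul_apply]
    rw [← neg_add, lin_alt H, vv H hv (by omega) (by omega) (by omega) (by omega)]
    by_cases hst : s = t
    · subst hst
      rw [if_pos rfl, if_pos rfl, H.smul_mul', H.one_mul', neg_smul, neg_neg]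
    · have : (s : ℕ) ≠ t := fun h => hst (Fin.ext h)
      simp [hst, this, a_zero_mul H]

theorem v_om_JB (H : IsAltStarAlg A conj) {v : ℕ → A} {m p : ℕ} (hv : IsHypBasis A conj v m)
    (hp : p < m) {w : Fin (m + 1) → ℝ} (hw : w ∈ Sph v m p) (s : Fin (p + 1)) (a : A) :
    v s * (emb v m w * a) = emb v m w * JB H v p s a := by
  by_cases hs : (s : ℕ) = 0
  · simp [JB, hs, hv.v_zero, H.one_mul']
  · rw [v_om H hv hp hw (by omega) (by omega)]
    simp [JB, hs, lmul_apply]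

theorem DopP_analytic (H : IsAltStarAlg A conj) (v : ℕ → A) {p : ℕ}
    {Ω₀ : Set (Fin (p + 1) → ℝ)} {f₀ : (Fin (p + 1) → ℝ) → A} (h : AnalyticOnNhd ℝ f₀ Ω₀) :
    AnalyticOnNhd ℝ (DJ (JJ H v p) f₀) Ω₀ := by
  haveI := H.finDim
  haveI : CompleteSpace A := FiniteDimensional.complete ℝ A
  have h1 := h.fderiv
  refine Finset.analyticOnNhd_fun_sum _ fun s _ => ?_
  have h2 := (ContinuousLinearMap.apply ℝ A (Pi.single s (1 : ℝ) : Fin (p + 1) → ℝ)).comp_analyticOnNhd h1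
  exact (JJ H v p s).comp_analyticOnNhd h2

theorem normq_smul (H : IsAltStarAlg A conj) (v : ℕ → A) (m p : ℕ) (x : Fin (m + 1) → ℝ) (a : A) :
    emb v m (normq m p x) * (rad m p x • a) = ∑ s, xqpart m p x s • lmul H (v s) a := by
  have h0 : emb v m (xqpart m p x) * a = ∑ s, xqpart m p x s • lmul H (v s) a := emb_mul H _ _ _ _
  rw [← h0, normq, emb_smul, H.smul_mul', H.mul_smul', smul_smul]
  by_cases h : rad m p x = 0
  · have h1 : xqpart m p x = 0 := by
      rw [rad, Real.sqrt_eq_zero (Finset.sum_nonneg fun _ _ => sq_nonneg _)] at h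
      funext s
      have := (Finset.sum_eq_zero_iff_of_nonneg (fun _ _ => sq_nonneg _)).1 h s (Finset.mem_univ _)
      simpa using this
    have : emb v m (0 : Fin (m + 1) → ℝ) = 0 := by simp [emb]
    rw [h1, this, a_zero_mul H, smul_zero]
  · rw [inv_mul_cancel₀ h, one_smul]

theorem rad_sq (m p : ℕ) (x : Fin (m + 1) → ℝ) : rad m p x ^ 2 = (sg m p x).2 :=
  Real.sq_sqrt (Finset.sum_nonneg fun _ _ => sq_nonneg _)

/-- even coefficients -/
noncomputable def cA (k : ℕ) : ℝ := (-1) ^ k / (2 * k).factorial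
/-- odd coefficients -/
noncomputable def cB (k : ℕ) : ℝ := (-1) ^ k / (2 * k + 1).factorial

theorem CKe_eq (H : IsAltStarAlg A conj) (v : ℕ → A) (m p : ℕ) (f₀ : (Fin (p + 1) → ℝ) → A)
    (x : Fin (m + 1) → ℝ) : CKe v m p f₀ x =
    UU m p (fun s => lmul H (v s)) (fun z => ∑' k, useq p cA f₀ k z)
      (fun z => ∑' k, useq p cB (DJ (JJ H v p) f₀) k z) x := by
  haveI := H.finDim
  unfold CKe UU
  congr 1
  · refine tsum_congr fun k => ?_
    rw [useq, smul_smul, ← rad_sq, ← pow_mul, cA]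
    congr 1
    ring
  · rw [← normq_smul, ← tsum_const_smul'']
    congr 1
    refine tsum_congr fun k => ?_
    rw [useq, smul_smul, smul_smul, ← rad_sq, ← pow_mul, cB]
    congr 1
    ring

theorem cA_bound (k : ℕ) : |cA k| * (2 * k).factorial ≤ 1 := by
  have : (0 : ℝ) < (2 * k).factorial := by positivity
  rw [cA, abs_div, abs_pow, abs_neg, abs_one, one_pow, abs_of_pos this]
  field_simp; rfl

theorem cB_bound (k : ℕ) : |cB k| * (2 * k).factorial ≤ 1 := by
  have : (0 : ℝ) < (2 * k + 1).factorial := by positivity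
  rw [cB, abs_div, abs_pow, abs_neg, abs_one, one_pow, abs_of_pos this, one_div_mul_eq_div,
    div_le_one this]
  exact_mod_cast Nat.factorial_le (by omega)

theorem cA_rec (k : ℕ) : ((k : ℝ) + 1) * (4 * k + 2) * cA (k + 1) = - cA k := by
  have h : ((2 * (k + 1)).factorial : ℝ) = (2 * k + 2) * ((2 * k + 1) * (2 * k).factorial) := by
    rw [show 2 * (k + 1) = 2 * k + 1 + 1 by ring, Nat.factorial_succ, Nat.factorial_succ]
    push_cast; ring
  rw [cA, cA, h, pow_succ]
  field_simp
  ring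

theorem cB_rec (k : ℕ) : ((k : ℝ) + 1) * (4 * k + 6) * cB (k + 1) = - cB k := by
  have h : ((2 * (k + 1) + 1).factorial : ℝ) =
      (2 * k + 3) * ((2 * k + 2) * (2 * k + 1).factorial) := by
    rw [show 2 * (k + 1) + 1 = 2 * k + 1 + 1 + 1 by ring, Nat.factorial_succ, Nat.factorial_succ]
    push_cast; ring
  rw [cB, cB, h, pow_succ]
  field_simp
  ring

theorem cB_cA (k : ℕ) : (2 * (k : ℝ) + 1) * cB k = cA k := by
  rw [cB, cA, Nat.factorial_succ]
  push_cast
  field_simp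

theorem cA_cB (k : ℕ) : (-2) * ((k : ℝ) + 1) * cA (k + 1) = cB k := by
  rw [cB, cA, show 2 * (k + 1) = 2 * k + 1 + 1 by ring, Nat.factorial_succ, pow_succ]
  push_cast
  field_simp
  ring

end Alg

section Dom
open scoped ContDiff NNReal ENNReal
variable {A : Type*} [NormedAddCommGroup A] [NormedSpace ℝ A]

/-- A common domain in the stem space for two series. -/
theorem exists_W [CompleteSpace A] {p : ℕ} {Ω₀ : Set (Fin (p + 1) → ℝ)} (hΩ₀ : IsOpen Ω₀)
    {g g' : (Fin (p + 1) → ℝ) → A} (h : AnalyticOnNhd ℝ g Ω₀) (h' : AnalyticOnNhd ℝ g' Ω₀)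
    {c c' : ℕ → ℝ} (hc : ∀ k, |c k| * (2 * k).factorial ≤ 1)
    (hc' : ∀ k, |c' k| * (2 * k).factorial ≤ 1) :
    ∃ W : Set ((Fin (p + 1) → ℝ) × ℝ), IsOpen W ∧ (∀ y ∈ Ω₀, (y, (0 : ℝ)) ∈ W) ∧
      W ⊆ Prod.fst ⁻¹' Ω₀ ∧
      (∀ y t t', (y, t) ∈ W → |t'| ≤ |t| → (y, t') ∈ W) ∧
      NC W (useq p c g) ∧ NC W (useq p c' g') := by
  have h1 : ∀ y₀ : Ω₀, ∃ ε > 0, Metric.ball (y₀ : Fin (p + 1) → ℝ) ε ⊆ Ω₀ ∧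
      NC (Metric.ball ((y₀ : Fin (p + 1) → ℝ), (0 : ℝ)) ε) (useq p c g) ∧
      NC (Metric.ball ((y₀ : Fin (p + 1) → ℝ), (0 : ℝ)) ε) (useq p c' g') := by
    intro y₀
    obtain ⟨a, ha, hb, hN⟩ := useq_NC_local hΩ₀ h y₀.2
    obtain ⟨a', ha', hb', hN'⟩ := useq_NC_local hΩ₀ h' y₀.2
    have m1 := hN c hc
    have m2 := hN' c' hc'
    have s1 : Metric.ball ((y₀ : Fin (p + 1) → ℝ), (0 : ℝ)) (min a a') ⊆
      Metric.ball ((y₀ : Fin (p + 1) → ℝ), (0 : ℝ)) a := Metric.ball_subset_ball (min_le_left _ _)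
    have s2 : Metric.ball ((y₀ : Fin (p + 1) → ℝ), (0 : ℝ)) (min a a') ⊆
      Metric.ball ((y₀ : Fin (p + 1) → ℝ), (0 : ℝ)) a' :=
      Metric.ball_subset_ball (min_le_right _ _)
    refine ⟨min a a', lt_min ha ha', (Metric.ball_subset_ball (min_le_left _ _)).trans hb,
      ⟨fun k => (m1.1 k).mono s1, fun x hx => m1.2 x (s1 hx)⟩,
      ⟨fun k => (m2.1 k).mono s2, fun x hx => m2.2 x (s2 hx)⟩⟩
  choose ε hε hb hN hN' using h1
  set W : Set ((Fin (p + 1) → ℝ) × ℝ) :=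
    ⋃ y₀ : Ω₀, Metric.ball ((y₀ : Fin (p + 1) → ℝ), (0 : ℝ)) (ε y₀) with hWdef
  have hWo : IsOpen W := isOpen_iUnion fun _ => Metric.isOpen_ball
  have hNC : ∀ {u : ℕ → (Fin (p + 1) → ℝ) × ℝ → A},
      (∀ y₀ : Ω₀, NC (Metric.ball ((y₀ : Fin (p + 1) → ℝ), (0 : ℝ)) (ε y₀)) u) → NC W u := by
    intro u hu
    refine ⟨fun k z hz => ?_, fun x hx => ?_⟩
    · obtain ⟨y₀, hy⟩ := Set.mem_iUnion.1 hz
      exact (((hu y₀).1 k).contDiffAt (Metric.isOpen_ball.mem_nhds hy)).contDiffWithinAt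
    · obtain ⟨y₀, hy⟩ := Set.mem_iUnion.1 hx
      exact (hu y₀).2 x hy
  refine ⟨W, hWo, fun y hy => Set.mem_iUnion.2 ⟨⟨y, hy⟩, Metric.mem_ball_self (hε _)⟩, ?_, ?_,
    hNC hN, hNC hN'⟩
  · intro z hz
    obtain ⟨y₀, hy⟩ := Set.mem_iUnion.1 hz
    rw [Metric.mem_ball, Prod.dist_eq, max_lt_iff] at hy
    exact hb y₀ hy.1
  · intro y t t' hz ht
    obtain ⟨y₀, hy⟩ := Set.mem_iUnion.1 hz
    refine Set.mem_iUnion.2 ⟨y₀, ?_⟩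
    rw [Metric.mem_ball, Prod.dist_eq, max_lt_iff] at hy ⊢
    refine ⟨hy.1, ?_⟩
    have h2 := hy.2
    simp only [Real.dist_eq, sub_zero] at h2 ⊢
    linarith

theorem isConnected_fiber {E F : Type*} [TopologicalSpace E] [TopologicalSpace F]
    {Ω₀ : Set F} (hc : IsConnected Ω₀) {S : Set E} (ι : F → E) (hι : Continuous ι)
    (hιS : ∀ y ∈ Ω₀, ι y ∈ S) (γ : E → ℝ → E) (hγ : ∀ x ∈ S, Continuous (γ x))
    (hγ1 : ∀ x ∈ S, γ x 1 = x) (hγ0 : ∀ x ∈ S, γ x 0 ∈ ι '' Ω₀)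
    (hγS : ∀ x ∈ S, ∀ τ ∈ Set.Icc (0 : ℝ) 1, γ x τ ∈ S) : IsConnected S := by
  obtain ⟨y₁, hy₁⟩ := hc.nonempty
  have hB : IsPreconnected (ι '' Ω₀) := hc.isPreconnected.image ι hι.continuousOn
  refine ⟨⟨ι y₁, hιS y₁ hy₁⟩, isPreconnected_of_forall (ι y₁) fun x hx => ?_⟩
  refine ⟨ι '' Ω₀ ∪ γ x '' Set.Icc 0 1, ?_, Or.inl ⟨y₁, hy₁, rfl⟩,
    Or.inr ⟨1, ⟨zero_le_one, le_rfl⟩, hγ1 x hx⟩, ?_⟩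
  · rintro z (⟨y, hy, rfl⟩ | ⟨τ, hτ, rfl⟩)
    · exact hιS y hy
    · exact hγS x hx τ hτ
  · exact IsPreconnected.union (γ x 0) (hγ0 x hx) ⟨0, ⟨le_rfl, zero_le_one⟩, rfl⟩ hB
      (isPreconnected_Icc.image _ (hγ x hx).continuousOn)

theorem xqpart_pt {m p : ℕ} {w : Fin (m + 1) → ℝ}
    (hw : ∀ s : Fin (m + 1), (s : ℕ) ≤ p → w s = 0) (y : Fin (p + 1) → ℝ) (r : ℝ) :
    xqpart m p (pt m p w y r) = r • w := by
  funext s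
  by_cases h : (s : ℕ) ≤ p
  · simp [xqpart, h, hw s h]
  · have : ¬ (s : ℕ) < p + 1 := by omega
    simp [xqpart, h, pt, injP, this]

theorem projP_pt {m p : ℕ} (hp : p < m) {w : Fin (m + 1) → ℝ}
    (hw : ∀ s : Fin (m + 1), (s : ℕ) ≤ p → w s = 0) (y : Fin (p + 1) → ℝ) (r : ℝ) :
    projP m p (pt m p w y r) = y := by
  funext s
  have h1 : (s : ℕ) < m + 1 := by omega
  have h2 : w ⟨s, h1⟩ = 0 := hw _ (by simp; omega)
  simp [projP, h1, pt, injP, h2]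
  intro h3; omega

theorem sg_pt {m p : ℕ} (hp : p < m) {w : Fin (m + 1) → ℝ}
    (hw : ∀ s : Fin (m + 1), (s : ℕ) ≤ p → w s = 0) (y : Fin (p + 1) → ℝ) (r : ℝ) :
    sg m p (pt m p w y r) = (y, r ^ 2 * ∑ s, w s ^ 2) := by
  simp only [sg, xqpart_pt hw, projP_pt hp hw, Pi.smul_apply, smul_eq_mul, mul_pow, Finset.mul_sum]

theorem injP_projP {m p : ℕ} (x : Fin (m + 1) → ℝ) : injP m p (projP m p x) = xppart m p x := by
  funext s
  by_cases h : (s : ℕ) ≤ p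
  · have : (s : ℕ) < p + 1 := by omega
    simp [injP, xppart, projP, h, this]
    intro h3; omega
  · have : ¬ (s : ℕ) < p + 1 := by omega
    simp [injP, xppart, h, this]

theorem xp_add_xq {m p : ℕ} (x : Fin (m + 1) → ℝ) : xppart m p x + xqpart m p x = x := by
  funext s
  by_cases h : (s : ℕ) ≤ p <;> simp [xppart, xqpart, h]

theorem xqpart_low {m p : ℕ} (x : Fin (m + 1) → ℝ) (s : Fin (m + 1)) (h : (s : ℕ) ≤ p) :
    xqpart m p x s = 0 := by simp [xqpart, h]

theorem xqpart_refl {m p : ℕ} (x : Fin (m + 1) → ℝ) (s : Fin (m + 1)) :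
    xqpart m p (reflP m p x) s = - xqpart m p x s := by
  by_cases h : (s : ℕ) ≤ p <;> simp [xqpart, reflP, h]

theorem sg_refl {m p : ℕ} (x : Fin (m + 1) → ℝ) : sg m p (reflP m p x) = sg m p x := by
  simp only [sg, xqpart_refl, neg_sq]
  congr 1
  funext s
  by_cases h : (s : ℕ) < m + 1
  · have : (s : ℕ) ≤ p := by omega
    simp [projP, reflP, h, this]
  · simp [projP, h]

theorem injP_continuous (m p : ℕ) : Continuous (injP m p) := by
  refine continuous_pi fun s => ?_
  by_cases h : (s : ℕ) < p + 1
  · simp only [injP, h, dif_pos]; exact continuous_apply _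
  · simp only [injP, h, dif_neg, not_false_iff]; exact continuous_const

theorem sg_injP {m p : ℕ} (hp : p < m) (y : Fin (p + 1) → ℝ) : sg m p (injP m p y) = (y, 0) := by
  have := sg_pt (w := (0 : Fin (m + 1) → ℝ)) hp (fun _ _ => rfl) y 0
  simpa [pt] using this

theorem conn_omega {m p : ℕ} (hp : p < m) {Ω₀ : Set (Fin (p + 1) → ℝ)} (hc : IsConnected Ω₀)
    {W : Set ((Fin (p + 1) → ℝ) × ℝ)} (hW0 : ∀ y ∈ Ω₀, (y, (0 : ℝ)) ∈ W)
    (hWs : W ⊆ Prod.fst ⁻¹' Ω₀) (hbal : ∀ y t t', (y, t) ∈ W → |t'| ≤ |t| → (y, t') ∈ W) :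
    IsConnected (sg m p ⁻¹' W) := by
  refine isConnected_fiber hc (injP m p) (injP_continuous m p)
    (fun y hy => by simpa [sg_injP hp] using hW0 y hy)
    (fun x τ => pt m p (xqpart m p x) (projP m p x) τ) (fun x _ => ?_) (fun x _ => ?_)
    (fun x hx => ?_) (fun x hx τ hτ => ?_)
  · exact continuous_const.add (continuous_id.smul continuous_const)
  · simp [pt, injP_projP, xp_add_xq]
  · exact ⟨projP m p x, hWs hx, by simp [pt]⟩
  · rw [Set.mem_preimage, sg_pt hp (xqpart_low x)]
    refine hbal _ _ _ hx ?_
    rw [abs_mul, abs_of_nonneg (sq_nonneg τ)]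
    exact mul_le_of_le_one_left (abs_nonneg _) (pow_le_one₀ hτ.1 hτ.2)

theorem conn_slice {p : ℕ} {Ω₀ : Set (Fin (p + 1) → ℝ)} (hc : IsConnected Ω₀)
    {W : Set ((Fin (p + 1) → ℝ) × ℝ)} (hW0 : ∀ y ∈ Ω₀, (y, (0 : ℝ)) ∈ W)
    (hWs : W ⊆ Prod.fst ⁻¹' Ω₀) (hbal : ∀ y t t', (y, t) ∈ W → |t'| ≤ |t| → (y, t') ∈ W) :
    IsConnected {z : (Fin (p + 1) → ℝ) × ℝ | (z.1, z.2 ^ 2) ∈ W} := by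
  refine isConnected_fiber hc (fun y => (y, 0)) (by fun_prop)
    (fun y hy => by simpa using hW0 y hy)
    (fun x τ => (x.1, τ * x.2)) (fun x _ => by fun_prop) (fun x _ => by simp)
    (fun x hx => ?_) (fun x hx τ hτ => ?_)
  · have hx' : (x.1, x.2 ^ 2) ∈ W := hx
    have hx2 : ((x.1, x.2 ^ 2) : (Fin (p + 1) → ℝ) × ℝ).1 ∈ Ω₀ := @hWs (x.1, x.2 ^ 2) hx'
    exact ⟨x.1, hx2, by simp⟩
  · refine hbal _ _ _ hx ?_
    simp only
    rw [mul_pow, abs_mul, abs_of_nonneg (sq_nonneg τ)]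
    exact mul_le_of_le_one_left (abs_nonneg _) (pow_le_one₀ hτ.1 hτ.2)

theorem EE_zero {p : ℕ} (α : ℝ) (z : (Fin (p + 1) → ℝ) × ℝ) :
    EE p α (fun _ => (0 : A)) z = 0 := by
  have h : ∀ e, dd e (fun _ : (Fin (p + 1) → ℝ) × ℝ => (0 : A)) = fun _ => 0 := by
    intro e; funext z; simp [dd]
  simp [EE, h]

/-- derivative of a composition with `(y, r) ↦ (y, r²)`. -/
theorem dd_comp_sq {p : ℕ} {Φ : (Fin (p + 1) → ℝ) × ℝ → A} {z : (Fin (p + 1) → ℝ) × ℝ}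
    (h : DifferentiableAt ℝ Φ (z.1, z.2 ^ 2)) :
    (∀ s, dd (ey p s) (fun z => Φ (z.1, z.2 ^ 2)) z = dd (ey p s) Φ (z.1, z.2 ^ 2)) ∧
    dd (et p) (fun z => Φ (z.1, z.2 ^ 2)) z = (2 * z.2) • dd (et p) Φ (z.1, z.2 ^ 2) ∧
    DifferentiableAt ℝ (fun z : (Fin (p + 1) → ℝ) × ℝ => Φ (z.1, z.2 ^ 2)) z := by
  have h1 : HasFDerivAt (fun z : (Fin (p + 1) → ℝ) × ℝ => (z.1, z.2 ^ 2))
      ((ContinuousLinearMap.fst ℝ (Fin (p + 1) → ℝ) ℝ).prod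
        ((2 * z.2) • ContinuousLinearMap.snd ℝ (Fin (p + 1) → ℝ) ℝ)) z := by
    refine hasFDerivAt_fst.prodMk ?_
    have := (hasFDerivAt_snd (𝕜 := ℝ) (p := z)).pow 2
    simpa using this
  have h2 : HasFDerivAt (fun z : (Fin (p + 1) → ℝ) × ℝ => Φ (z.1, z.2 ^ 2)) _ z :=
    HasFDerivAt.comp z h.hasFDerivAt h1
  refine ⟨fun s => ?_, ?_, h2.differentiableAt⟩
  · rw [dd, h2.fderiv]
    simp [dd, ey]
  · rw [dd, h2.fderiv, dd, ← map_smul]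
    simp [et]

end Dom

section Fin
open scoped ContDiff NNReal ENNReal
variable {A : Type*} [NormedAddCommGroup A] [NormedSpace ℝ A] [Mul A] [One A] {conj : A → A}

theorem DomCR_zero (H : IsAltStarAlg A conj) {v : ℕ → A} {m p : ℕ} (hv : IsHypBasis A conj v m)
    (hp : p < m) {w : Fin (m + 1) → ℝ} (hw : w ∈ Sph v m p)
    {W : Set ((Fin (p + 1) → ℝ) × ℝ)} (hW : IsOpen W) {Φ Ψ : (Fin (p + 1) → ℝ) × ℝ → A}
    (hΦ : ContDiffOn ℝ ∞ Φ W) (hΨ : ContDiffOn ℝ ∞ Ψ W)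
    (h1 : ∀ z ∈ W, ∑ s, JJ H v p s (dd (ey p s) Φ z) = Ψ z + (2 * z.2) • dd (et p) Ψ z)
    (h2 : ∀ z ∈ W, ∑ s, JB H v p s (dd (ey p s) Ψ z) = (-2 : ℝ) • dd (et p) Φ z)
    {z : (Fin (p + 1) → ℝ) × ℝ} (hz : (z.1, z.2 ^ 2) ∈ W) :
    DomCR v m p w (fun z => Φ (z.1, z.2 ^ 2) + lmul H (emb v m w) (z.2 • Ψ (z.1, z.2 ^ 2))) z
      = 0 := by
  obtain ⟨a1, a2, a3⟩ := dd_comp_sq (diffAt_of hW hΦ hz)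
  obtain ⟨b1, b2, b3⟩ := dd_comp_sq (diffAt_of hW hΨ hz)
  have c3 : DifferentiableAt ℝ (fun z : (Fin (p + 1) → ℝ) × ℝ => z.2) z := differentiableAt_snd
  have d3 : DifferentiableAt ℝ (fun z : (Fin (p + 1) → ℝ) × ℝ => z.2 • Ψ (z.1, z.2 ^ 2)) z :=
    c3.fun_smul b3
  have e3 : DifferentiableAt ℝ (fun z : (Fin (p + 1) → ℝ) × ℝ =>
      lmul H (emb v m w) (z.2 • Ψ (z.1, z.2 ^ 2))) z :=
    (lmul H (emb v m w)).differentiableAt.comp z d3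
  have k1 : ∀ e : (Fin (p + 1) → ℝ) × ℝ, dd e (fun z : (Fin (p + 1) → ℝ) × ℝ => z.2) z = e.2 := by
    intro e; simp [dd, fderiv_snd]
  have key : ∀ e, dd e (fun z => Φ (z.1, z.2 ^ 2) +
        lmul H (emb v m w) (z.2 • Ψ (z.1, z.2 ^ 2))) z =
      dd e (fun z => Φ (z.1, z.2 ^ 2)) z + lmul H (emb v m w)
        (z.2 • dd e (fun z => Ψ (z.1, z.2 ^ 2)) z + e.2 • Ψ (z.1, z.2 ^ 2)) := by
    intro e
    rw [dd_add a3 e3, dd_clm _ d3, dd_smul c3 b3, k1]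
  have hx : ∀ s, pdSx p s (fun z => Φ (z.1, z.2 ^ 2) +
        lmul H (emb v m w) (z.2 • Ψ (z.1, z.2 ^ 2))) z =
      dd (ey p s) Φ (z.1, z.2 ^ 2) + emb v m w * (z.2 • dd (ey p s) Ψ (z.1, z.2 ^ 2)) := by
    intro s
    have := key (ey p s)
    rw [a1, b1] at this
    rw [show (ey p s).2 = 0 from rfl, zero_smul, add_zero] at this
    exact this
  have hr : pdSr p (fun z => Φ (z.1, z.2 ^ 2) +
        lmul H (emb v m w) (z.2 • Ψ (z.1, z.2 ^ 2))) z =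
      (2 * z.2) • dd (et p) Φ (z.1, z.2 ^ 2) + emb v m w *
        (z.2 • ((2 * z.2) • dd (et p) Ψ (z.1, z.2 ^ 2)) + Ψ (z.1, z.2 ^ 2)) := by
    have := key (et p)
    rw [a2, b2] at this
    rw [show (et p).2 = 1 from rfl, one_smul] at this
    exact this
  have g1 := h1 _ hz
  have g2 := h2 _ hz
  rw [DomCR, DopSx, hr]
  simp only [hx]
  simp only [H.mul_add', v_om_JB H hv hp hw, map_smul, Finset.sum_add_distrib]
  rw [← a_mul_sum H, ← Finset.smul_sum, g2]
  have g1' : ∑ s : Fin (p + 1), v s * dd (ey p s) Φ (z.1, z.2 ^ 2) =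
    Ψ (z.1, z.2 ^ 2) + (2 * z.2 ^ 2) • dd (et p) Ψ (z.1, z.2 ^ 2) := g1
  rw [g1']
  simp only [H.mul_smul', om_om H hw, smul_smul]
  module

theorem GSM_of (H : IsAltStarAlg A conj) {v : ℕ → A} {m p : ℕ} (hv : IsHypBasis A conj v m)
    (hp : p < m) {W : Set ((Fin (p + 1) → ℝ) × ℝ)} (hW : IsOpen W)
    {Φ Ψ : (Fin (p + 1) → ℝ) × ℝ → A}
    (hΦ : ContDiffOn ℝ ∞ Φ W) (hΨ : ContDiffOn ℝ ∞ Ψ W)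
    (h1 : ∀ z ∈ W, ∑ s, JJ H v p s (dd (ey p s) Φ z) = Ψ z + (2 * z.2) • dd (et p) Ψ z)
    (h2 : ∀ z ∈ W, ∑ s, JB H v p s (dd (ey p s) Ψ z) = (-2 : ℝ) • dd (et p) Φ z)
    {f : (Fin (m + 1) → ℝ) → A} (hf : ∀ x, f x = UU m p (fun s => lmul H (v s)) Φ Ψ x) :
    GSM v m p f (sg m p ⁻¹' W) := by
  intro w hw
  have hset : sliceSet m p (sg m p ⁻¹' W) w = {z | (z.1, z.2 ^ 2) ∈ W} := by
    ext z
    simp only [sliceSet, Set.mem_setOf_eq, Set.mem_preimage, sg_pt hp hw.1, sph_norm H hv hw,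
      mul_one]
  have hfun : sliceFun m p f w =
      fun z => Φ (z.1, z.2 ^ 2) + lmul H (emb v m w) (z.2 • Ψ (z.1, z.2 ^ 2)) := by
    funext z
    rw [sliceFun, hf, UU, sg_pt hp hw.1, sph_norm H hv hw, mul_one, xqpart_pt hw.1, lmul_apply,
      H.mul_smul', emb_mul H, Finset.smul_sum]
    simp only [Pi.smul_apply, smul_eq_mul, mul_smul, lmul_apply]
  rw [hset, hfun]
  refine ⟨?_, fun z hz => DomCR_zero H hv hp hw hW hΦ hΨ h1 h2 hz⟩
  have hτ : ContDiff ℝ ∞ (fun z : (Fin (p + 1) → ℝ) × ℝ => (z.1, z.2 ^ 2)) :=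
    contDiff_fst.prodMk (contDiff_snd.pow 2)
  have q1 : ContDiffOn ℝ ∞ (fun z : (Fin (p + 1) → ℝ) × ℝ => Φ (z.1, z.2 ^ 2))
      {z | (z.1, z.2 ^ 2) ∈ W} := hΦ.comp hτ.contDiffOn fun _ hx => hx
  have q2 : ContDiffOn ℝ ∞ (fun z : (Fin (p + 1) → ℝ) × ℝ => Ψ (z.1, z.2 ^ 2))
      {z | (z.1, z.2 ^ 2) ∈ W} := hΨ.comp hτ.contDiffOn fun _ hx => hx
  have q3 : ContDiffOn ℝ ∞ (fun z : (Fin (p + 1) → ℝ) × ℝ =>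
      lmul H (emb v m w) (z.2 • Ψ (z.1, z.2 ^ 2))) {z | (z.1, z.2 ^ 2) ∈ W} :=
    (lmul H (emb v m w)).contDiff.comp_contDiffOn (contDiff_snd.contDiffOn.smul q2)
  exact (q1.add q3).of_le (by exact_mod_cast le_top)

theorem sliceDomain_of (H : IsAltStarAlg A conj) {v : ℕ → A} {m p : ℕ}
    (hv : IsHypBasis A conj v m) (hp : p < m) {Ω₀ : Set (Fin (p + 1) → ℝ)} (hc : IsConnected Ω₀)
    {W : Set ((Fin (p + 1) → ℝ) × ℝ)} (hW : IsOpen W) (hW0 : ∀ y ∈ Ω₀, (y, (0 : ℝ)) ∈ W)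
    (hWs : W ⊆ Prod.fst ⁻¹' Ω₀) (hbal : ∀ y t t', (y, t) ∈ W → |t'| ≤ |t| → (y, t') ∈ W) :
    SliceDomain v m p (sg m p ⁻¹' W) := by
  refine ⟨isOpen_sg hW, conn_omega hp hc hW0 hWs hbal, ?_, fun w hw => ?_⟩
  · obtain ⟨y, hy⟩ := hc.nonempty
    refine ⟨injP m p y, by simpa [sg_injP hp] using hW0 y hy, ?_⟩
    have := xqpart_pt (w := (0 : Fin (m + 1) → ℝ)) (p := p) (fun _ _ => rfl) y 0
    simpa [pt] using this
  · have hset : sliceSet m p (sg m p ⁻¹' W) w = {z | (z.1, z.2 ^ 2) ∈ W} := by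
      ext z
      simp only [sliceSet, Set.mem_setOf_eq, Set.mem_preimage, sg_pt hp hw.1, sph_norm H hv hw,
        mul_one]
    rw [hset]
    exact conn_slice hc hW0 hWs hbal

theorem PSym_of (H : IsAltStarAlg A conj) {v : ℕ → A} {m p : ℕ}
    (hv : IsHypBasis A conj v m) (hp : p < m) (W : Set ((Fin (p + 1) → ℝ) × ℝ)) :
    PSym v m p (sg m p ⁻¹' W) := by
  intro x hx w hw
  have : sg m p (xppart m p x + rad m p x • w) = sg m p x := by
    rw [← injP_projP]
    have h := sg_pt hp hw.1 (projP m p x) (rad m p x)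
    rw [sph_norm H hv hw, mul_one, rad_sq] at h
    exact h
  rw [Set.mem_preimage, this]
  exact hx

theorem PE_PO_eq {m p : ℕ} (L : Fin (m + 1) → A →L[ℝ] A) {W : Set ((Fin (p + 1) → ℝ) × ℝ)}
    {Φ Ψ : (Fin (p + 1) → ℝ) × ℝ → A} {K : ℝ} {f : (Fin (m + 1) → ℝ) → A}
    (hf : Set.EqOn f (fun x => K • UU m p L Φ Ψ x) (sg m p ⁻¹' W)) :
    Set.EqOn (PE m p f) (fun x => K • UU m p L Φ (fun _ => 0) x) (sg m p ⁻¹' W) ∧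
    Set.EqOn (PO m p f) (fun x => K • UU m p L (fun _ => 0) Ψ x) (sg m p ⁻¹' W) := by
  have hr : ∀ x ∈ sg m p ⁻¹' W, reflP m p x ∈ sg m p ⁻¹' W := fun x hx => by
    rw [Set.mem_preimage, sg_refl]; exact hx
  constructor <;> intro x hx
  · simp only [PE, hf hx, hf (hr x hx), UU, sg_refl, xqpart_refl, neg_smul, Finset.sum_neg_distrib,
      map_zero, smul_zero, Finset.sum_const_zero]
    module
  · simp only [PO, hf hx, hf (hr x hx), UU, sg_refl, xqpart_refl, neg_smul, Finset.sum_neg_distrib]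
    module

theorem memGS_even (H : IsAltStarAlg A conj) (v : ℕ → A) {m p : ℕ}
    (L : Fin (m + 1) → A →L[ℝ] A) {W : Set ((Fin (p + 1) → ℝ) × ℝ)}
    {Φ : (Fin (p + 1) → ℝ) × ℝ → A} {K : ℝ} {f : (Fin (m + 1) → ℝ) → A}
    (hf : Set.EqOn f (fun x => K • UU m p L Φ (fun _ => 0) x) (sg m p ⁻¹' W)) :
    MemGS v m p (sg m p ⁻¹' W) f := by
  refine ⟨fun z => K • Φ (z.1, z.2 ^ 2), fun _ => 0, fun z => by simp [reflD], fun x hx => ?_⟩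
  rw [hf hx]
  simp only [a_mul_zero H, rad_sq, UU, map_zero, smul_zero, Finset.sum_const_zero, add_zero]
  rfl

theorem memGS_odd (H : IsAltStarAlg A conj) (v : ℕ → A) {m p : ℕ}
    {W : Set ((Fin (p + 1) → ℝ) × ℝ)}
    {Ψ : (Fin (p + 1) → ℝ) × ℝ → A} {K : ℝ} {f : (Fin (m + 1) → ℝ) → A}
    (hf : Set.EqOn f (fun x => K • UU m p (fun s => lmul H (v s)) (fun _ => 0) Ψ x)
      (sg m p ⁻¹' W)) :
    MemGS v m p (sg m p ⁻¹' W) f := by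
  refine ⟨fun _ => 0, fun z => z.2 • (K • Ψ (z.1, z.2 ^ 2)), fun z => by simp [reflD],
    fun x hx => ?_⟩
  rw [hf hx]
  simp only [normq_smul H, rad_sq, UU, zero_add, map_smul, Finset.smul_sum]
  refine Finset.sum_congr rfl fun s _ => ?_
  rw [smul_comm]
  rfl

end Fin

/-- For odd `q` and real analytic `f₀` on a domain `Ω₀ ⊆ ℝ^{p+1}`, the partial even
and odd parts of `Δ_x^{(q-1)/2} CK[f₀]` are harmonic generalized partial-slice
functions on a p-symmetric slice domain `Ω ⊃ Ω₀` on which `CK[f₀]` is defined. -/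
theorem pe_po_harmonic
    {A : Type*} [NormedAddCommGroup A] [NormedSpace ℝ A] [Mul A] [One A]
    (conj : A → A) (H : IsAltStarAlg A conj)
    (v : ℕ → A) (m p : ℕ) (hv : IsHypBasis A conj v m) (hp : p < m)
    (hq : Odd (m - p))
    (Ω₀ : Set (Fin (p + 1) → ℝ)) (hΩ₀ : IsOpen Ω₀) (hΩ₀conn : IsConnected Ω₀)
    (f₀ : (Fin (p + 1) → ℝ) → A) (hf₀ : AnalyticOnNhd ℝ f₀ Ω₀) :
    ∃ Ω : Set (Fin (m + 1) → ℝ),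
      PSym v m p Ω ∧ SliceDomain v m p Ω ∧
      injP m p '' Ω₀ ⊆ Ω ∧ Ω ⊆ Omega0star m p Ω₀ ∧
      GSM v m p (CKe v m p f₀) Ω ∧
      Harmonic m (PE m p (lapIterF m ((m - p - 1) / 2) (CKe v m p f₀))) Ω ∧
      Harmonic m (PO m p (lapIterF m ((m - p - 1) / 2) (CKe v m p f₀))) Ω ∧
      MemGS v m p Ω (PE m p (lapIterF m ((m - p - 1) / 2) (CKe v m p f₀))) ∧
      MemGS v m p Ω (PO m p (lapIterF m ((m - p - 1) / 2) (CKe v m p f₀))) := by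
  haveI := H.finDim
  haveI : CompleteSpace A := FiniteDimensional.complete ℝ A
  obtain ⟨n, hn⟩ := hq
  have hn2 : (m - p - 1) / 2 = n := by omega
  rw [hn2]
  obtain ⟨W, hW, hW0, hWs, hbal, hN, hN'⟩ := exists_W hΩ₀ hf₀ (DopP_analytic H v hf₀)
    cA_bound cB_bound
  have hg : ContDiffOn ℝ (↑(⊤ : ℕ∞)) f₀ Ω₀ := hf₀.contDiffOn hΩ₀.uniqueDiffOn
  have hg' := DJ_contDiffOn (JJ H v p) hΩ₀ hg
  have hΦ := hN.contDiffOn hW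
  have hΨ := hN'.contDiffOn hW
  have hE := EE_series hΩ₀ hW hWs hg hN cA_rec
  have hE' := EE_series hΩ₀ hW hWs hg' hN' cB_rec
  have h1 := CR_one (JJ H v p) hΩ₀ hW hWs hg hN hN' cB_cA
  have h2 := CR_two (JJ H v p) (JB H v p) (JB_JJ H hv hp) hΩ₀ hW hWs hg hN hN' cA_cB
  have hCK := CKe_eq H v m p f₀
  obtain ⟨K, hK⟩ := lapIterF_UU hp (fun s => lmul H (v s)) hW hΦ hΨ hE hE'
    (fun x _ => hCK x) n
  obtain ⟨hPE, hPO⟩ := PE_PO_eq _ hK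
  refine ⟨sg m p ⁻¹' W, PSym_of H hv hp W, sliceDomain_of H hv hp hΩ₀conn hW hW0 hWs hbal, ?_,
    fun x hx => hWs hx, GSM_of H hv hp hW hΦ hΨ h1 h2 hCK, ?_, ?_,
    memGS_even H v _ hPE, memGS_odd H v hPO⟩
  · rintro _ ⟨y, hy, rfl⟩
    rw [Set.mem_preimage, sg_injP hp]
    exact hW0 y hy
  · exact lapF_zero_UU hp _ hW hn (iter_dt_contDiffOn hW hΦ n) contDiffOn_const
      (iter_dt_EE hW hΦ hE n) (fun z _ => EE_zero _ z) K hPE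
  · exact lapF_zero_UU hp _ hW hn contDiffOn_const (iter_dt_contDiffOn hW hΨ n)
      (fun z _ => EE_zero _ z) (iter_dt_EE hW hΨ hE' n) K hPO

end GPSM
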